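/- Let n ≥ 1 and n/(n+1) < p ≤ 1, and fix ψ as in the context. There is a constant C = C(n,p,ψ) ≥ 1 such that for every locally integrable f : ℝⁿ → ℝ the following are equivalent: (i) there exists a Hajlasz gradient g of f on ℝⁿ with g ∈ L^p(ℝⁿ); (ii) for every j ∈ {1,…,n} the maximal function M_ψ(D_j f)(x) = sup_{t>0} t^{−n−1} |∫_{ℝⁿ} f(y) (∂_j ψ)((x−y)/t) dy| belongs to L^p(ℝⁿ). Moreover C^{−1} · Σ_{j=1}^n ‖M_ψ(D_j f)‖_{L^p(ℝⁿ)} ≤ inf{‖g‖_{L^p(ℝⁿ)} : g a Hajlasz gradient of f on ℝⁿ} ≤ C · Σ_{j=1}^n ‖M_ψ(D_j f)‖_{L^p(ℝⁿ)}. -/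

import Mathlib

open MeasureTheory Metric Set ENNReal NNReal

noncomputable section

/-- `g` is a Hajlasz gradient of `u` on `U ⊆ ℝⁿ`: `g` is measurable, nonnegative, and
off a set of measure zero `|u x - u y| ≤ ‖x - y‖ (g x + g y)` for `x, y ∈ U`. -/
def IsHajlaszGradientOn (n : ℕ) (u g : EuclideanSpace ℝ (Fin n) → ℝ)
    (U : Set (EuclideanSpace ℝ (Fin n))) : Prop :=
  Measurable g ∧ (∀ x, 0 ≤ g x) ∧
    ∃ E : Set (EuclideanSpace ℝ (Fin n)), MeasureTheory.volume E = 0 ∧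
      ∀ x ∈ U \ E, ∀ y ∈ U \ E, |u x - u y| ≤ ‖x - y‖ * (g x + g y)

/-- The `L^p` quasinorm (for a positive real exponent `p`) of a real function
with respect to the measure `μ`. -/
def lpNorm (n : ℕ) (p : ℝ) (g : EuclideanSpace ℝ (Fin n) → ℝ)
    (μ : Measure (EuclideanSpace ℝ (Fin n))) : ℝ≥0∞ :=
  (∫⁻ x, ENNReal.ofReal |g x| ^ p ∂μ) ^ (1 / p)

/-- The smooth maximal function of the distributional derivative `D_j f`:
`M_ψ(D_j f)(x) = sup_{t>0} t^{-n-1} |∫ f(y) (∂_j ψ)((x-y)/t) dy|`. -/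
def smoothMax (n : ℕ) (ψ f : EuclideanSpace ℝ (Fin n) → ℝ) (j : Fin n)
    (x : EuclideanSpace ℝ (Fin n)) : ℝ≥0∞ :=
  ⨆ (t : {s : ℝ // 0 < s}),
    ENNReal.ofReal ((t.1⁻¹) ^ (n + 1) *
      |∫ y, f y * fderiv ℝ ψ (t.1⁻¹ • (x - y)) (EuclideanSpace.single j 1)|)


/-- Uncentered maximal function. -/
def UM {n : ℕ} (h : EuclideanSpace ℝ (Fin n) → ℝ≥0∞) (x : EuclideanSpace ℝ (Fin n)) : ℝ≥0∞ :=
  ⨆ a : {a : EuclideanSpace ℝ (Fin n) × ℝ // 0 < a.2},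
    (ball a.1.1 a.1.2).indicator
      (fun _ => (ENNReal.ofReal a.1.2 ^ n)⁻¹ * ∫⁻ y in ball a.1.1 a.1.2, h y) x

lemma UM_lsc {n : ℕ} (h : EuclideanSpace ℝ (Fin n) → ℝ≥0∞) : LowerSemicontinuous (UM h) := by
  unfold UM
  apply lowerSemicontinuous_iSup
  intro a
  exact isOpen_ball.lowerSemicontinuous_indicator (zero_le)

lemma UM_meas {n : ℕ} (h : EuclideanSpace ℝ (Fin n) → ℝ≥0∞) : Measurable (UM h) :=
  (UM_lsc h).measurable

lemma le_UM {n : ℕ} (h : EuclideanSpace ℝ (Fin n) → ℝ≥0∞) (x c : EuclideanSpace ℝ (Fin n))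
    (s : ℝ) (hs : 0 < s) (hx : x ∈ ball c s) :
    (ENNReal.ofReal s ^ n)⁻¹ * ∫⁻ y in ball c s, h y ≤ UM h x := by
  unfold UM
  refine le_iSup_of_le ⟨(c, s), hs⟩ ?_
  simp [indicator_of_mem hx]

/-- volume of unit ball -/
def kap (n : ℕ) : ℝ≥0∞ := volume (ball (0 : EuclideanSpace ℝ (Fin n)) 1)

lemma kap_ne_top (n : ℕ) : kap n ≠ ⊤ := measure_ball_lt_top.ne
lemma kap_pos (n : ℕ) : 0 < kap n := measure_ball_pos _ _ one_pos
lemma vol_ball {n : ℕ} (x : EuclideanSpace ℝ (Fin n)) (s : ℝ) (hs : 0 < s) :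
    volume (ball x s) = ENNReal.ofReal s ^ n * kap n := by
  rw [Measure.addHaar_ball_of_pos _ _ hs, kap, finrank_euclideanSpace_fin,
    ENNReal.ofReal_pow hs.le]

lemma UM_weak {n : ℕ} (hn : 1 ≤ n) (h : EuclideanSpace ℝ (Fin n) → ℝ≥0∞)
    (hH : ∫⁻ y, h y ≠ ⊤) (l : ℝ≥0∞) (hl : l ≠ 0) (hl' : l ≠ ⊤) :
    volume {x | l < UM h x} ≤ 4 ^ n * kap n * (l⁻¹ * ∫⁻ y, h y) := by
  set T : Set (EuclideanSpace ℝ (Fin n) × ℝ) :=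
    {a | 0 < a.2 ∧ l * ENNReal.ofReal a.2 ^ n < ∫⁻ y in ball a.1 a.2, h y} with hT
  have hR : ∀ a ∈ T, a.2 ≤ max 1 ((l⁻¹ * ∫⁻ y, h y).toReal) := by
    rintro a ⟨h0, h1⟩
    rcases le_or_gt a.2 1 with h2 | h2
    · exact le_max_of_le_left h2
    · apply le_max_of_le_right
      have h3 : l * ENNReal.ofReal a.2 ^ n ≤ ∫⁻ y, h y :=
        h1.le.trans (setLIntegral_le_lintegral _ _)
      have h4 : ENNReal.ofReal a.2 ^ n ≤ l⁻¹ * ∫⁻ y, h y := by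
        calc ENNReal.ofReal a.2 ^ n = l⁻¹ * (l * ENNReal.ofReal a.2 ^ n) := by
              rw [← mul_assoc, ENNReal.inv_mul_cancel hl hl', one_mul]
          _ ≤ _ := by gcongr
      have h5 : l⁻¹ * ∫⁻ y, h y ≠ ⊤ := ENNReal.mul_ne_top (ENNReal.inv_ne_top.2 hl) hH
      rw [← ENNReal.ofReal_pow h0.le] at h4
      have h6 := (ENNReal.ofReal_le_iff_le_toReal h5).1 h4
      exact (le_self_pow₀ h2.le (by omega)).trans h6
  obtain ⟨u, huT, hdisj, hcov⟩ := Vitali.exists_disjoint_subfamily_covering_enlargement_ball T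
    (fun a => a.1) (fun a => a.2) _ hR 4 (by norm_num)
  have hcount : u.Countable := by
    apply hdisj.countable_of_isOpen (fun a _ => isOpen_ball)
    intro a ha
    exact nonempty_ball.2 (huT ha).1
  have hsub : {x | l < UM h x} ⊆ ⋃ b ∈ u, ball b.1 (4 * b.2) := by
    intro x hx
    obtain ⟨a, ha⟩ := lt_iSup_iff.1 (show l < UM h x from hx)
    by_cases hxa : x ∈ ball a.1.1 a.1.2
    · rw [indicator_of_mem hxa] at ha
      have haT : a.1 ∈ T := by
        refine ⟨a.2, ?_⟩
        have hpos : ENNReal.ofReal a.1.2 ^ n ≠ 0 := by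
          have := a.2
          positivity
        have hfin : ENNReal.ofReal a.1.2 ^ n ≠ ⊤ := by finiteness
        rw [mul_comm, ← div_eq_mul_inv] at ha
        exact (ENNReal.lt_div_iff_mul_lt (Or.inl hpos) (Or.inl hfin)).1 ha
      obtain ⟨b, hb, hab⟩ := hcov _ haT
      exact mem_biUnion hb (hab hxa)
    · rw [indicator_of_notMem hxa] at ha
      exact absurd ha (by simp)
  have key : ∀ b ∈ u, volume (ball b.1 (4 * b.2)) ≤
      4 ^ n * kap n * (l⁻¹ * ∫⁻ y in ball b.1 b.2, h y) := by
    intro b hb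
    obtain ⟨h0, h1⟩ := huT hb
    rw [vol_ball _ _ (by positivity), ENNReal.ofReal_mul (by norm_num), mul_pow]
    have : ENNReal.ofReal b.2 ^ n ≤ l⁻¹ * ∫⁻ y in ball b.1 b.2, h y := by
      calc ENNReal.ofReal b.2 ^ n = l⁻¹ * (l * ENNReal.ofReal b.2 ^ n) := by
              rw [← mul_assoc, ENNReal.inv_mul_cancel hl hl', one_mul]
          _ ≤ _ := by gcongr
    calc ENNReal.ofReal 4 ^ n * ENNReal.ofReal b.2 ^ n * kap n
        = 4 ^ n * kap n * ENNReal.ofReal b.2 ^ n := by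
          rw [show ENNReal.ofReal 4 = 4 by norm_num]; ring
      _ ≤ _ := by gcongr
  have := hcount.to_subtype
  calc volume {x | l < UM h x} ≤ volume (⋃ b ∈ u, ball b.1 (4 * b.2)) := measure_mono hsub
    _ ≤ ∑' b : u, volume (ball b.1.1 (4 * b.1.2)) := measure_biUnion_le _ hcount _
    _ ≤ ∑' b : u, 4 ^ n * kap n * (l⁻¹ * ∫⁻ y in ball b.1.1 b.1.2, h y) :=
      ENNReal.tsum_le_tsum fun b => key b.1 b.2
    _ = 4 ^ n * kap n * (l⁻¹ * ∑' b : u, ∫⁻ y in ball b.1.1 b.1.2, h y) := by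
      rw [ENNReal.tsum_mul_left, ENNReal.tsum_mul_left]
    _ = 4 ^ n * kap n * (l⁻¹ * ∫⁻ y in ⋃ b : u, ball b.1.1 b.1.2, h y) := by
      rw [lintegral_iUnion (fun b => measurableSet_ball)]
      intro a b hab
      exact hdisj a.2 b.2 (fun h => hab (Subtype.ext h))
    _ ≤ _ := by gcongr; exact Measure.restrict_le_self

lemma UM_split {n : ℕ} (h : EuclideanSpace ℝ (Fin n) → ℝ≥0∞) (l : ℝ≥0∞)
    (x : EuclideanSpace ℝ (Fin n)) :
    UM h x ≤ UM ({y | l < h y}.indicator h) x + l * kap n := by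
  unfold UM
  refine iSup_le fun a => ?_
  by_cases hxa : x ∈ ball a.1.1 a.1.2
  · rw [indicator_of_mem hxa]
    have hle := le_UM ({y | l < h y}.indicator h) x a.1.1 a.1.2 a.2 hxa
    refine le_trans ?_ (add_le_add_left hle _)
    have hpos : ENNReal.ofReal a.1.2 ^ n ≠ 0 := by
      have := a.2
      positivity
    have hfin : ENNReal.ofReal a.1.2 ^ n ≠ ⊤ := by finiteness
    calc (ENNReal.ofReal a.1.2 ^ n)⁻¹ * ∫⁻ y in ball a.1.1 a.1.2, h y
        ≤ (ENNReal.ofReal a.1.2 ^ n)⁻¹ * ∫⁻ y in ball a.1.1 a.1.2,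
            ({y | l < h y}.indicator h y + l) := by
          gcongr with y
          by_cases hy : l < h y
          · rw [indicator_of_mem (show y ∈ {y | l < h y} from hy)]; exact le_self_add
          · rw [indicator_of_notMem (show y ∉ {y | l < h y} from hy), zero_add]
            exact not_lt.1 hy
      _ = (ENNReal.ofReal a.1.2 ^ n)⁻¹ * (∫⁻ y in ball a.1.1 a.1.2, {y | l < h y}.indicator h y)
          + l * kap n := by
          rw [lintegral_add_right _ measurable_const, setLIntegral_const, vol_ball _ _ a.2, mul_add]
          congr 1
          calc _ = ((ENNReal.ofReal a.1.2 ^ n)⁻¹ * ENNReal.ofReal a.1.2 ^ n) * (l * kap n) := by ring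
            _ = _ := by rw [ENNReal.inv_mul_cancel hpos hfin, one_mul]
  · rw [indicator_of_notMem hxa]; exact zero_le

/-- elementary layer cake for a number -/
lemma layer_num (c : ℝ≥0∞) (hc : c ≠ ⊤) (a : ℝ) (ha : 0 < a) :
    ENNReal.ofReal a * ∫⁻ t in Ioi (0:ℝ), {t : ℝ | ENNReal.ofReal t < c}.indicator
      (fun t => ENNReal.ofReal (t ^ (a - 1))) t = c ^ a := by
  have := lintegral_rpow_eq_lintegral_meas_lt_mul (Measure.dirac ())
    (f := fun _ : Unit => c.toReal) (Filter.Eventually.of_forall fun _ => ENNReal.toReal_nonneg)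
    (aemeasurable_const) ha
  rw [lintegral_dirac, ← ENNReal.ofReal_rpow_of_nonneg ENNReal.toReal_nonneg ha.le,
    ENNReal.ofReal_toReal hc] at this
  rw [this]
  congr 1
  apply setLIntegral_congr_fun measurableSet_Ioi
  intro t ht
  have hiff : ENNReal.ofReal t < c ↔ t < c.toReal := by
    exact ENNReal.ofReal_lt_iff_lt_toReal (le_of_lt ht) hc
  by_cases h : ENNReal.ofReal t < c
  · have h' := hiff.1 h
    simp [indicator_of_mem (show t ∈ {t : ℝ | ENNReal.ofReal t < c} from h), h']
  · have h' : c.toReal ≤ t := not_lt.1 fun h2 => h (hiff.2 h2)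
    simp [indicator_of_notMem (show t ∉ {t : ℝ | ENNReal.ofReal t < c} from h), h']

lemma UM_level {n : ℕ} (hn : 1 ≤ n) (h : EuclideanSpace ℝ (Fin n) → ℝ≥0∞) (hh : Measurable h)
    (a : ℝ) (ha : 1 < a) (hfin : ∫⁻ y, h y ^ a ≠ ⊤) (l : ℝ≥0∞) (hl : l ≠ 0) (hl' : l ≠ ⊤) :
    volume {x | l < UM h x} ≤ 2 * 4 ^ n * kap n *
      (l⁻¹ * ∫⁻ y, {y | l < 2 * kap n * h y}.indicator h y) := by
  have hk := kap_pos n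
  have hk' := kap_ne_top n
  set m : ℝ≥0∞ := l / (2 * kap n) with hm
  have hk0 : 2 * kap n ≠ 0 := by simp [hk.ne']
  have hkt : 2 * kap n ≠ ⊤ := by finiteness
  have hm0 : m ≠ 0 := by simp [hm, hl, hkt]
  have hmt : m ≠ ⊤ := by
    rw [hm]; exact ENNReal.div_ne_top hl' hk0
  have hset : {y | l < 2 * kap n * h y} = {y | m < h y} := by
    ext y
    simp only [mem_ofPred_eq, hm]
    rw [ENNReal.div_lt_iff (Or.inl hk0) (Or.inl hkt), mul_comm]
  rw [hset]
  have hint : ∫⁻ y, {y | m < h y}.indicator h y ≠ ⊤ := by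
    have : ∫⁻ y, {y | m < h y}.indicator h y ≤ ∫⁻ y, m ^ (1 - a) * h y ^ a := by
      apply lintegral_mono
      intro y
      by_cases hy : m < h y
      · simp only [indicator_of_mem (show y ∈ {y | m < h y} from hy)]
        have hy0 : h y ≠ 0 := (hm0.bot_lt.trans hy).ne'
        by_cases hyt : h y = ⊤
        · rw [hyt, ENNReal.top_rpow_of_pos (by linarith), ENNReal.mul_top]
          exact (ENNReal.rpow_pos hm0.bot_lt hmt).ne'
        calc h y = h y ^ (1 - a) * h y ^ a := by
              rw [← ENNReal.rpow_add _ _ hy0 hyt]; simp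
          _ ≤ m ^ (1 - a) * h y ^ a := by
              refine mul_le_mul_left (?_ : h y ^ (1 - a) ≤ m ^ (1 - a)) _
              rw [show 1 - a = -(a - 1) by ring, ENNReal.rpow_neg, ENNReal.rpow_neg]
              exact ENNReal.inv_le_inv.2 (ENNReal.rpow_le_rpow hy.le (by linarith))
      · simp only [indicator_of_notMem (show y ∉ {y | m < h y} from hy)]
        exact zero_le
    refine ne_top_of_le_ne_top ?_ this
    rw [lintegral_const_mul _ (hh.pow_const a)]
    exact ENNReal.mul_ne_top (ENNReal.rpow_ne_top_of_ne_zero hm0 hmt) hfin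
  have hl2 : l / 2 ≠ 0 := by simp [hl]
  have hl2' : l / 2 ≠ ⊤ := ENNReal.div_ne_top hl' (by norm_num)
  calc volume {x | l < UM h x} ≤ volume {x | l / 2 < UM ({y | m < h y}.indicator h) x} := by
        apply measure_mono
        intro x hx
        have h1 := UM_split h m x
        have h2 : m * kap n = l / 2 := by
          rw [hm, ENNReal.div_eq_inv_mul, ENNReal.mul_inv (by simp) (by simp), ENNReal.div_eq_inv_mul]
          calc 2⁻¹ * (kap n)⁻¹ * l * kap n = 2⁻¹ * l * ((kap n)⁻¹ * kap n) := by ring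
            _ = _ := by rw [ENNReal.inv_mul_cancel hk.ne' hk', mul_one]
        rw [h2] at h1
        have h3 : l < UM ({y | m < h y}.indicator h) x + l / 2 := lt_of_lt_of_le hx h1
        by_contra hcon
        simp only [mem_ofPred_eq, not_lt] at hcon
        have : l < l / 2 + l / 2 := h3.trans_le (by gcongr)
        rw [ENNReal.add_halves] at this
        exact lt_irrefl _ this
    _ ≤ _ := UM_weak hn _ hint _ hl2 hl2'
    _ = _ := by
        have : (l / 2)⁻¹ = 2 * l⁻¹ := by
          rw [ENNReal.inv_div (by simp) (by simp), div_eq_mul_inv]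
        rw [this]; ring

lemma UM_strong {n : ℕ} (hn : 1 ≤ n) (a : ℝ) (ha : 1 < a) :
    ∃ C : ℝ≥0∞, C ≠ 0 ∧ C ≠ ⊤ ∧ ∀ h : EuclideanSpace ℝ (Fin n) → ℝ≥0∞, Measurable h →
      ∫⁻ x, UM h x ^ a ≤ C * ∫⁻ x, h x ^ a := by
  have hk := kap_pos n
  have hk' := kap_ne_top n
  set D : ℝ≥0∞ := 2 * 4 ^ n * kap n with hD
  have hD0 : D ≠ 0 := by simp [hD, hk.ne']
  have hDt : D ≠ ⊤ := by finiteness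
  have hkr0 : (2 * kap n) ^ (a - 1) ≠ 0 :=
    (ENNReal.rpow_pos (by simp [hk]) (by finiteness)).ne'
  have hkrt : (2 * kap n) ^ (a - 1) ≠ ⊤ :=
    ENNReal.rpow_ne_top_of_nonneg (by linarith) (by finiteness)
  set A : ℝ≥0∞ := ENNReal.ofReal a * (ENNReal.ofReal (a - 1))⁻¹ with hA
  have hA0 : A ≠ 0 := by
    simp only [hA, ne_eq, mul_eq_zero, not_or]
    exact ⟨by simp; linarith, by simp⟩
  have hAt : A ≠ ⊤ := ENNReal.mul_ne_top (by simp) (by simp; linarith)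
  refine ⟨D * A * (2 * kap n) ^ (a - 1), ?_, ?_, ?_⟩
  · exact mul_ne_zero (mul_ne_zero hD0 hA0) hkr0
  · exact ENNReal.mul_ne_top (ENNReal.mul_ne_top hDt hAt) hkrt
  intro h hh
  by_cases hfin : ∫⁻ y, h y ^ a = ⊤
  · rw [hfin, ENNReal.mul_top]
    · exact le_top
    · exact mul_ne_zero (mul_ne_zero hD0 hA0) hkr0
  have hlev := UM_level hn h hh a ha hfin
  have hhfin : ∀ᵐ x, h x ≠ ⊤ := by
    have := ae_lt_top (hh.pow_const a) hfin
    filter_upwards [this] with x hx hx'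
    rw [hx', ENNReal.top_rpow_of_pos (by linarith)] at hx
    exact lt_irrefl _ hx
  have hUfin : ∀ᵐ x, UM h x ≠ ⊤ := by
    have hbd : ∀ k : ℕ, volume {x | UM h x = ⊤} ≤ D * (∫⁻ y, {y | 1 < 2 * kap n * h y}.indicator h y)
        * ((k + 1 : ℕ) : ℝ≥0∞)⁻¹ := by
      intro k
      have h1 := hlev ((k + 1 : ℕ) : ℝ≥0∞) (by simp) (by simp)
      calc volume {x | UM h x = ⊤} ≤ _ := measure_mono (fun x hx => by
              simp only [mem_ofPred_eq] at hx ⊢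
              rw [hx]; exact ENNReal.natCast_lt_top _)
        _ ≤ _ := h1
        _ ≤ D * (((k + 1 : ℕ) : ℝ≥0∞)⁻¹ * ∫⁻ y, {y | 1 < 2 * kap n * h y}.indicator h y) := by
            gcongr with y
            push_cast
            exact le_add_self
        _ = _ := by ring
    have hfin1 : ∫⁻ y, {y | 1 < 2 * kap n * h y}.indicator h y ≠ ⊤ := by
      have hle : ∫⁻ y, {y | 1 < 2 * kap n * h y}.indicator h y ≤
          ∫⁻ y, (2 * kap n) ^ (a - 1) * h y ^ a := by
        apply lintegral_mono
        intro y
        by_cases hy : 1 < 2 * kap n * h y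
        · simp only [indicator_of_mem (show y ∈ {y | 1 < 2 * kap n * h y} from hy)]
          calc h y = 1 ^ (a - 1) * h y := by simp
            _ ≤ (2 * kap n * h y) ^ (a - 1) * h y := by
                gcongr
            _ = (2 * kap n) ^ (a - 1) * (h y ^ (a - 1) * h y ^ (1:ℝ)) := by
                rw [ENNReal.mul_rpow_of_nonneg _ _ (by linarith : 0 ≤ a - 1), ENNReal.rpow_one]
                ring
            _ = _ := by
                rw [← ENNReal.rpow_add_of_nonneg _ _ (by linarith) (by linarith)]
                simp
        · simp only [indicator_of_notMem (show y ∉ {y | 1 < 2 * kap n * h y} from hy)]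
          exact zero_le
      refine ne_top_of_le_ne_top ?_ hle
      rw [lintegral_const_mul _ (hh.pow_const a)]
      exact ENNReal.mul_ne_top hkrt hfin
    have hlim : Filter.Tendsto (fun k : ℕ => D * (∫⁻ y, {y | 1 < 2 * kap n * h y}.indicator h y)
        * ((k + 1 : ℕ) : ℝ≥0∞)⁻¹) Filter.atTop (nhds (D * (∫⁻ y, {y | 1 < 2 * kap n * h y}.indicator h y)
        * 0)) := by
      apply ENNReal.Tendsto.const_mul
      · exact ENNReal.tendsto_inv_nat_nhds_zero.comp (Filter.tendsto_add_atTop_nat 1)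
      · right; exact ENNReal.mul_ne_top hDt hfin1
    rw [mul_zero] at hlim
    have := ge_of_tendsto' hlim hbd
    rw [ae_iff]
    simpa using this
  have hUeq : ∫⁻ x, UM h x ^ a = ∫⁻ x, ENNReal.ofReal ((UM h x).toReal ^ a) := by
    apply lintegral_congr_ae
    filter_upwards [hUfin] with x hx
    rw [← ENNReal.ofReal_rpow_of_nonneg ENNReal.toReal_nonneg (by linarith), ENNReal.ofReal_toReal hx]
  rw [hUeq, lintegral_rpow_eq_lintegral_meas_lt_mul volume
    (Filter.Eventually.of_forall fun _ => ENNReal.toReal_nonneg)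
    (UM_meas h).ennreal_toReal.aemeasurable (by linarith)]
  have hstep : ∫⁻ t in Ioi (0:ℝ), volume {x | t < (UM h x).toReal} * ENNReal.ofReal (t ^ (a - 1)) ≤
      ∫⁻ t in Ioi (0:ℝ), D * ∫⁻ y, h y * {t : ℝ | ENNReal.ofReal t < 2 * kap n * h y}.indicator
        (fun t => ENNReal.ofReal (t ^ (a - 1 - 1))) t := by
    apply setLIntegral_mono' measurableSet_Ioi
    intro t ht
    have ht0 : 0 < t := ht
    have h1 : volume {x | t < (UM h x).toReal} ≤ volume {x | ENNReal.ofReal t < UM h x} := by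
      apply measure_mono
      intro x hx
      simp only [mem_ofPred_eq] at hx ⊢
      have hne : UM h x ≠ ⊤ := by
        intro h0
        rw [h0] at hx
        simp at hx
        linarith
      exact (ENNReal.ofReal_lt_iff_lt_toReal ht0.le hne).2 hx
    have h2 := h1.trans (hlev (ENNReal.ofReal t) (by simpa using ht0) (by simp))
    have h3 : (∫⁻ y, {y | ENNReal.ofReal t < 2 * kap n * h y}.indicator h y) *
        ENNReal.ofReal (t ^ (a - 1 - 1)) =
        ∫⁻ y, h y * {t : ℝ | ENNReal.ofReal t < 2 * kap n * h y}.indicator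
        (fun t => ENNReal.ofReal (t ^ (a - 1 - 1))) t := by
      rw [← lintegral_mul_const]
      · apply lintegral_congr
        intro y
        by_cases hy : ENNReal.ofReal t < 2 * kap n * h y
        · simp [indicator, hy]
        · simp [indicator, hy]
      · apply hh.indicator
        exact measurableSet_lt measurable_const (hh.const_mul _)
    calc volume {x | t < (UM h x).toReal} * ENNReal.ofReal (t ^ (a - 1))
        ≤ D * ((ENNReal.ofReal t)⁻¹ *
          ∫⁻ y, {y | ENNReal.ofReal t < 2 * kap n * h y}.indicator h y) *
          ENNReal.ofReal (t ^ (a - 1)) := by gcongr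
      _ = D * ((∫⁻ y, {y | ENNReal.ofReal t < 2 * kap n * h y}.indicator h y) *
          ENNReal.ofReal (t ^ (a - 1 - 1))) := by
          rw [Real.rpow_sub_one ht0.ne' (a - 1), div_eq_mul_inv, ENNReal.ofReal_mul (by positivity),
            ENNReal.ofReal_inv_of_pos ht0]
          ring
      _ = _ := by rw [h3]
  have hm2 : Measurable (Function.uncurry fun (t : ℝ) (y : EuclideanSpace ℝ (Fin n)) =>
      h y * {t : ℝ | ENNReal.ofReal t < 2 * kap n * h y}.indicator
        (fun t => ENNReal.ofReal (t ^ (a - 1 - 1))) t) := by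
    apply Measurable.mul (hh.comp measurable_snd)
    have : (fun q : ℝ × EuclideanSpace ℝ (Fin n) =>
      {t : ℝ | ENNReal.ofReal t < 2 * kap n * h q.2}.indicator
        (fun t => ENNReal.ofReal (t ^ (a - 1 - 1))) q.1) =
        {q : ℝ × EuclideanSpace ℝ (Fin n) | ENNReal.ofReal q.1 < 2 * kap n * h q.2}.indicator
        (fun q => ENNReal.ofReal (q.1 ^ (a - 1 - 1))) := by
      ext q
      simp [indicator]
    rw [this]
    apply Measurable.indicator
    · fun_prop
    · exact measurableSet_lt (by fun_prop) ((hh.comp measurable_snd).const_mul _)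
  calc _ ≤ ENNReal.ofReal a * ∫⁻ t in Ioi (0:ℝ), D * ∫⁻ y, h y *
        {t : ℝ | ENNReal.ofReal t < 2 * kap n * h y}.indicator
        (fun t => ENNReal.ofReal (t ^ (a - 1 - 1))) t := by gcongr
    _ = ENNReal.ofReal a * (D * ∫⁻ y, h y * ∫⁻ t in Ioi (0:ℝ),
        {t : ℝ | ENNReal.ofReal t < 2 * kap n * h y}.indicator
        (fun t => ENNReal.ofReal (t ^ (a - 1 - 1))) t) := by
        rw [lintegral_const_mul _ (by exact hm2.lintegral_prod_right'), lintegral_lintegral_swap hm2.aemeasurable]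
        congr 2
        apply lintegral_congr
        intro y
        rw [lintegral_const_mul]
        apply Measurable.indicator (by fun_prop)
        exact measurableSet_lt (by fun_prop) measurable_const
    _ = ENNReal.ofReal a * (D * ∫⁻ y, (ENNReal.ofReal (a-1))⁻¹ * (2 * kap n) ^ (a - 1) * h y ^ a) := by
        congr 2
        apply lintegral_congr_ae
        filter_upwards [hhfin] with y hy
        have h1 := layer_num (2 * kap n * h y) (by finiteness) (a - 1) (by linarith)
        have ha0 : ENNReal.ofReal (a - 1) ≠ 0 := by simp; linarith
        have h2 : ∫⁻ t in Ioi (0:ℝ),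
          {t : ℝ | ENNReal.ofReal t < 2 * kap n * h y}.indicator
          (fun t => ENNReal.ofReal (t ^ (a - 1 - 1))) t =
            (ENNReal.ofReal (a-1))⁻¹ * (2 * kap n * h y) ^ (a - 1) := by
          rw [← h1, ← mul_assoc, ENNReal.inv_mul_cancel ha0 (by simp), one_mul]
        rw [h2, ENNReal.mul_rpow_of_nonneg _ _ (by linarith : 0 ≤ a - 1)]
        calc _ = (ENNReal.ofReal (a-1))⁻¹ * (2 * kap n) ^ (a - 1) * (h y ^ (a-1) * h y ^ (1:ℝ)) := by
              rw [ENNReal.rpow_one]; ring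
          _ = _ := by
              rw [← ENNReal.rpow_add_of_nonneg _ _ (by linarith) (by linarith)]; simp
    _ = _ := by
        rw [lintegral_const_mul _ (hh.pow_const a), hA]; ring

lemma UM_Lp {n : ℕ} (hn : 1 ≤ n) (r p : ℝ) (hr : 0 < r) (hrp : r < p) :
    ∃ C : ℝ≥0∞, C ≠ ⊤ ∧ ∀ h : EuclideanSpace ℝ (Fin n) → ℝ≥0∞, Measurable h →
      (∫⁻ x, ((UM (fun y => h y ^ r) x) ^ (1 / r)) ^ p) ^ (1 / p) ≤
        C * (∫⁻ x, h x ^ p) ^ (1 / p) := by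
  have hp : 0 < p := hr.trans hrp
  obtain ⟨C, hC0, hCt, hC⟩ := UM_strong (n := n) hn (p / r) ((one_lt_div hr).2 hrp)
  refine ⟨C ^ (1 / p), ENNReal.rpow_ne_top_of_nonneg (by positivity) hCt, fun h hh => ?_⟩
  have := hC (fun y => h y ^ r) (hh.pow_const r)
  rw [← ENNReal.mul_rpow_of_nonneg _ _ (by positivity)]
  refine ENNReal.rpow_le_rpow ?_ (by positivity)
  calc _ = ∫⁻ x, UM (fun y => h y ^ r) x ^ (p / r) := by
        congr 1; ext x; rw [← ENNReal.rpow_mul]; congr 1; field_simp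
    _ ≤ _ := this
    _ = _ := by
        congr 2; ext x; rw [← ENNReal.rpow_mul]; congr 1; field_simp

lemma exists_good_point {n : ℕ} (h : EuclideanSpace ℝ (Fin n) → ℝ≥0∞) (hh : Measurable h)
    (E : Set (EuclideanSpace ℝ (Fin n))) (hE : volume E = 0) (x : EuclideanSpace ℝ (Fin n))
    (s : ℝ) (hs : 0 < s) :
    ∃ y ∈ ball x s, y ∉ E ∧
      h y ≤ (kap n)⁻¹ * ((ENNReal.ofReal s ^ n)⁻¹ * ∫⁻ y in ball x s, h y) := by
  have hk := kap_pos n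
  have hk' := kap_ne_top n
  have hpos : ENNReal.ofReal s ^ n ≠ 0 := by positivity
  have hfin : ENNReal.ofReal s ^ n ≠ ⊤ := by finiteness
  have hne : volume.restrict (ball x s) ≠ 0 := by
    rw [Ne, Measure.restrict_eq_zero]; exact (measure_ball_pos _ _ hs).ne'
  have : IsFiniteMeasure (volume.restrict (ball x s)) := ⟨by simpa using measure_ball_lt_top⟩
  have hN : volume.restrict (ball x s) (E ∪ (ball x s)ᶜ) = 0 := by
    refine le_antisymm ((measure_union_le _ _).trans ?_) zero_le
    rw [Measure.restrict_apply measurableSet_ball.compl]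
    have : volume.restrict (ball x s) E = 0 :=
      le_antisymm ((Measure.restrict_apply_le _ _).trans hE.le) zero_le
    simp [this]
  obtain ⟨y, hy, hy2⟩ := exists_notMem_null_le_laverage hne hh.aemeasurable hN
  refine ⟨y, ?_, ?_, ?_⟩
  · by_contra h; exact hy (Or.inr h)
  · intro h; exact hy (Or.inl h)
  · refine hy2.trans (le_of_eq ?_)
    rw [setLAverage_eq, vol_ball _ _ hs, ENNReal.div_eq_inv_mul,
      ENNReal.mul_inv (Or.inl hpos) (Or.inl hfin)]
    ring

lemma haj_pointwise {n : ℕ} (e : ℝ) (he : 1 ≤ e)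
    (f g : EuclideanSpace ℝ (Fin n) → ℝ) (hg : Measurable g) (hg0 : ∀ x, 0 ≤ g x)
    (E : Set (EuclideanSpace ℝ (Fin n))) (hE : volume E = 0)
    (hfg : ∀ x ∉ E, ∀ y ∉ E, |f x - f y| ≤ ‖x - y‖ * (g x + g y))
    (x₀ : EuclideanSpace ℝ (Fin n)) (t : ℝ) (ht : 0 < t) :
    ∃ z, ∀ x ∈ ball x₀ t, x ∉ E → edist (f x) (f z) ≤
      10 * ∑' k : ℕ, ENNReal.ofReal (t / 2 ^ k) * ((kap n)⁻¹ * ((ENNReal.ofReal (t / 2 ^ k) ^ n)⁻¹ *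
        ∫⁻ y in ball x (t / 2 ^ k), ENNReal.ofReal (g y) ^ (1 / e))) ^ e
      + 3 * (ENNReal.ofReal t * ((kap n)⁻¹ * ((ENNReal.ofReal t ^ n)⁻¹ *
        ∫⁻ y in ball x₀ t, ENNReal.ofReal (g y) ^ (1 / e))) ^ e) := by
  have he0 : 0 < e := by linarith
  set h : EuclideanSpace ℝ (Fin n) → ℝ≥0∞ := fun y => ENNReal.ofReal (g y) ^ (1 / e) with hh
  have hm : Measurable h := (hg.ennreal_ofReal).pow_const _
  have hgh : ∀ y c, h y ≤ c → ENNReal.ofReal (g y) ≤ c ^ e := by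
    intro y c hc
    calc ENNReal.ofReal (g y) = h y ^ e := by
          rw [hh, ← ENNReal.rpow_mul]; simp [he0.ne']
      _ ≤ _ := ENNReal.rpow_le_rpow hc he0.le
  have hed : ∀ x ∉ E, ∀ y ∉ E, ∀ d : ℝ, dist x y ≤ d → edist (f x) (f y) ≤
      ENNReal.ofReal d * (ENNReal.ofReal (g x) + ENNReal.ofReal (g y)) := by
    intro x hx y hy d hd
    have hd0 : 0 ≤ d := dist_nonneg.trans hd
    rw [edist_dist, Real.dist_eq, ← ENNReal.ofReal_add (hg0 x) (hg0 y), ← ENNReal.ofReal_mul hd0]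
    apply ENNReal.ofReal_le_ofReal
    refine (hfg x hx y hy).trans ?_
    rw [← dist_eq_norm]
    exact mul_le_mul_of_nonneg_right hd (add_nonneg (hg0 x) (hg0 y))
  obtain ⟨z, hz, hzE, hzh⟩ := exists_good_point h hm E hE x₀ t ht
  refine ⟨z, fun x hx hxE => ?_⟩
  have htk : ∀ k : ℕ, 0 < t / 2 ^ k := fun k => by positivity
  choose y hy hyE hyh using fun k : ℕ => exists_good_point h hm E hE x (t / 2 ^ k) (htk k)
  set α : ℕ → ℝ≥0∞ := fun k => ((kap n)⁻¹ * ((ENNReal.ofReal (t / 2 ^ k) ^ n)⁻¹ *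
        ∫⁻ y in ball x (t / 2 ^ k), h y)) ^ e with hα
  set β : ℝ≥0∞ := ((kap n)⁻¹ * ((ENNReal.ofReal t ^ n)⁻¹ * ∫⁻ y in ball x₀ t, h y)) ^ e with hβ
  set S := ∑' k : ℕ, ENNReal.ofReal (t / 2 ^ k) * α k with hS
  have hgy : ∀ k, ENNReal.ofReal (g (y k)) ≤ α k := fun k => hgh _ _ (hyh k)
  have hgz : ENNReal.ofReal (g z) ≤ β := hgh _ _ hzh
  have hdouble : ∀ k : ℕ, ENNReal.ofReal (2 * (t / 2 ^ k)) = 4 * ENNReal.ofReal (t / 2 ^ (k+1)) := by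
    intro k
    rw [show (4:ℝ≥0∞) = ENNReal.ofReal 4 by norm_num, ← ENNReal.ofReal_mul (by norm_num)]
    congr 1; rw [pow_succ]; field_simp; norm_num
  have hterm : ∀ k, ENNReal.ofReal (t / 2 ^ k) * α k ≤ S := fun k => ENNReal.le_tsum k
  have h1 : ∀ N, edist (f (y 0)) (f (y N)) ≤ 6 * S := by
    intro N
    calc edist (f (y 0)) (f (y N)) ≤ ∑ k ∈ Finset.range N, edist (f (y k)) (f (y (k+1))) :=
          edist_le_range_sum_edist (fun k => f (y k)) N
      _ ≤ ∑ k ∈ Finset.range N, (2 * (ENNReal.ofReal (t / 2 ^ k) * α k) +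
          4 * (ENNReal.ofReal (t / 2 ^ (k+1)) * α (k+1))) := by
          apply Finset.sum_le_sum
          intro k _
          have hd : dist (y k) (y (k+1)) ≤ 2 * (t / 2 ^ k) := by
            have h1 := mem_ball.1 (hy k)
            have h2 := mem_ball.1 (hy (k+1))
            have h3 : t / 2 ^ (k+1) ≤ t / 2 ^ k := by
              apply div_le_div_of_nonneg_left ht.le (by positivity)
              exact pow_le_pow_right₀ (by norm_num) (by omega)
            have := dist_triangle_right (y k) (y (k+1)) x
            linarith
          refine (hed _ (hyE k) _ (hyE (k+1)) _ hd).trans ?_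
          rw [mul_add]
          refine add_le_add ?_ ?_
          · rw [ENNReal.ofReal_mul (by norm_num), mul_assoc, ENNReal.ofReal_ofNat]
            gcongr; exact hgy k
          · rw [hdouble, mul_assoc]
            gcongr; exact hgy (k+1)
      _ ≤ 2 * S + 4 * S := by
          rw [Finset.sum_add_distrib, ← Finset.mul_sum, ← Finset.mul_sum]
          gcongr
          · exact ENNReal.sum_le_tsum _
          · calc _ ≤ ∑' k : ℕ, ENNReal.ofReal (t / 2 ^ (k+1)) * α (k+1) := ENNReal.sum_le_tsum _
              _ ≤ S := ENNReal.tsum_comp_le_tsum_of_injective (add_left_injective 1)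
                  (fun k => ENNReal.ofReal (t / 2 ^ k) * α k)
      _ = 6 * S := by ring
  have h2 : edist (f (y 0)) (f z) ≤ 3 * S + 3 * (ENNReal.ofReal t * β) := by
    have hd : dist (y 0) z ≤ 3 * t := by
      have h1 := mem_ball.1 (hy 0)
      have h2 := mem_ball.1 hx
      have h3 := mem_ball'.1 hz
      simp only [pow_zero, div_one] at h1
      have := dist_triangle4 (y 0) x x₀ z
      linarith
    refine (hed _ (hyE 0) _ hzE _ hd).trans ?_
    rw [mul_add, ENNReal.ofReal_mul (by norm_num), ENNReal.ofReal_ofNat, mul_assoc, mul_assoc]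
    have := hterm 0
    simp only [pow_zero, div_one] at this
    gcongr
    exact le_trans (by gcongr; exact hgy 0) this
  have h3 : ∀ N, edist (f x) (f z) ≤ ENNReal.ofReal (t / 2 ^ N) * ENNReal.ofReal (g x) +
      (10 * S + 3 * (ENNReal.ofReal t * β)) := by
    intro N
    have hd : dist x (y N) ≤ t / 2 ^ N := (mem_ball'.1 (hy N)).le
    calc edist (f x) (f z) ≤ edist (f x) (f (y N)) + edist (f (y 0)) (f (y N)) +
          edist (f (y 0)) (f z) := by
          rw [edist_comm (f (y 0)) (f (y N))]; exact edist_triangle4 _ _ _ _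
      _ ≤ (ENNReal.ofReal (t / 2 ^ N) * ENNReal.ofReal (g x) + S) + 6 * S +
          (3 * S + 3 * (ENNReal.ofReal t * β)) := by
          gcongr
          · refine (hed _ hxE _ (hyE N) _ hd).trans ?_
            rw [mul_add]
            gcongr
            exact le_trans (by gcongr; exact hgy N) (hterm N)
          · exact h1 N
      _ = _ := by ring
  have hlim : Filter.Tendsto (fun N : ℕ => ENNReal.ofReal (t / 2 ^ N) * ENNReal.ofReal (g x) +
      (10 * S + 3 * (ENNReal.ofReal t * β))) Filter.atTop
      (nhds (ENNReal.ofReal 0 * ENNReal.ofReal (g x) + (10 * S + 3 * (ENNReal.ofReal t * β)))) := by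
    refine Filter.Tendsto.add (ENNReal.Tendsto.mul_const ?_ (by simp)) tendsto_const_nhds
    apply ENNReal.tendsto_ofReal
    have h0 : Filter.Tendsto (fun N : ℕ => t * ((1/2 : ℝ)) ^ N) Filter.atTop (nhds (t * 0)) :=
      (_root_.tendsto_pow_atTop_nhds_zero_of_lt_one (by norm_num) (by norm_num)).const_mul t
    rw [mul_zero] at h0
    refine h0.congr fun N => ?_
    rw [div_pow, one_pow, mul_one_div]
  have := ge_of_tendsto' hlim h3
  simpa using this

lemma meas_ball_int {n : ℕ} (h : EuclideanSpace ℝ (Fin n) → ℝ≥0∞) (hh : Measurable h) (s : ℝ) :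
    Measurable fun x => ∫⁻ y in ball x s, h y := by
  have : (fun x => ∫⁻ y in ball x s, h y) = fun x => ∫⁻ y,
      {q : EuclideanSpace ℝ (Fin n) × EuclideanSpace ℝ (Fin n) | dist q.2 q.1 < s}.indicator
        (fun q => h q.2) (x, y) := by
    ext x
    rw [← lintegral_indicator measurableSet_ball]
    rfl
  rw [this]
  apply Measurable.lintegral_prod_right'
  apply Measurable.indicator (hh.comp measurable_snd)
  exact measurableSet_lt (by fun_prop) measurable_const

lemma int_ball_int {n : ℕ} (h : EuclideanSpace ℝ (Fin n) → ℝ≥0∞) (hh : Measurable h) (s t : ℝ)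
    (hs : 0 < s) (x₀ : EuclideanSpace ℝ (Fin n)) :
    ∫⁻ x in ball x₀ t, ∫⁻ y in ball x s, h y ≤
      ENNReal.ofReal s ^ n * kap n * ∫⁻ y in ball x₀ (t + s), h y := by
  have hm : Measurable ({q : EuclideanSpace ℝ (Fin n) × EuclideanSpace ℝ (Fin n) |
      dist q.2 q.1 < s}.indicator (fun q => h q.2)) := by
    apply Measurable.indicator (hh.comp measurable_snd)
    exact measurableSet_lt (by fun_prop) measurable_const
  calc ∫⁻ x in ball x₀ t, ∫⁻ y in ball x s, h y
      = ∫⁻ x in ball x₀ t, ∫⁻ y,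
      {q : EuclideanSpace ℝ (Fin n) × EuclideanSpace ℝ (Fin n) | dist q.2 q.1 < s}.indicator
        (fun q => h q.2) (x, y) := by
        congr 1; ext x; rw [← lintegral_indicator measurableSet_ball]; rfl
    _ = ∫⁻ y, ∫⁻ x in ball x₀ t,
      {q : EuclideanSpace ℝ (Fin n) × EuclideanSpace ℝ (Fin n) | dist q.2 q.1 < s}.indicator
        (fun q => h q.2) (x, y) := lintegral_lintegral_swap hm.aemeasurable
    _ ≤ ∫⁻ y, (ball x₀ (t + s)).indicator (fun y => ENNReal.ofReal s ^ n * kap n * h y) y := by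
        apply lintegral_mono
        intro y
        by_cases hy : y ∈ ball x₀ (t + s)
        · simp only [indicator_of_mem hy]
          calc _ ≤ ∫⁻ x, {q : EuclideanSpace ℝ (Fin n) × EuclideanSpace ℝ (Fin n) |
                dist q.2 q.1 < s}.indicator (fun q => h q.2) (x, y) := setLIntegral_le_lintegral _ _
            _ = ∫⁻ x, (ball y s).indicator (fun _ => h y) x := by
                congr 1; ext x; simp [indicator, dist_comm]
            _ = _ := by
                rw [lintegral_indicator measurableSet_ball, setLIntegral_const, vol_ball _ _ hs]
                ring
        · simp only [indicator_of_notMem hy]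
          refine le_of_eq ?_
          rw [lintegral_eq_zero_iff (by exact hm.comp (by fun_prop))]
          filter_upwards [ae_restrict_mem measurableSet_ball] with x hx
          rw [indicator_of_notMem]
          · rfl
          · intro hq
            apply hy
            have h1 := mem_ball.1 hx
            have h2 : dist y x < s := hq
            have := dist_triangle y x x₀
            rw [mem_ball]; linarith
    _ = _ := by
        rw [lintegral_indicator measurableSet_ball, lintegral_const_mul _ hh]

lemma haj_poincare {n : ℕ} (hn : 1 ≤ n) (e : ℝ) (he : 1 ≤ e) (hen : n * (e - 1) < 1) :
    ∃ C : ℝ≥0∞, C ≠ ⊤ ∧ ∀ (f g : EuclideanSpace ℝ (Fin n) → ℝ), Measurable g → (∀ x, 0 ≤ g x) →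
    ∀ (E : Set (EuclideanSpace ℝ (Fin n))), volume E = 0 →
    (∀ x ∉ E, ∀ y ∉ E, |f x - f y| ≤ ‖x - y‖ * (g x + g y)) →
    ∀ (x₀ : EuclideanSpace ℝ (Fin n)) (t : ℝ), 0 < t →
    ∃ z, ∫⁻ x in ball x₀ t, edist (f x) (f z) ≤ C * (ENNReal.ofReal t * ENNReal.ofReal t ^ n *
      ((ENNReal.ofReal t ^ n)⁻¹ * ∫⁻ y in ball x₀ (2 * t), ENNReal.ofReal (g y) ^ (1 / e)) ^ e) := by
  have hk := kap_pos n
  have hk' := kap_ne_top n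
  have he0 : 0 < e := by linarith
  have hKi : (kap n)⁻¹ ^ e ≠ ⊤ := ENNReal.rpow_ne_top_of_nonneg he0.le (ENNReal.inv_ne_top.2 hk.ne')
  set ρ : ℝ≥0∞ := 2 ^ (n * (e - 1) - 1) with hρ
  have hρ1 : ρ < 1 := by
    rw [hρ]; apply ENNReal.rpow_lt_one_of_one_lt_of_neg (by norm_num) (by linarith)
  refine ⟨10 * ((kap n)⁻¹ ^ e * kap n * (1 - ρ)⁻¹) + 3 * ((kap n)⁻¹ ^ e * kap n), ?_, ?_⟩
  · have : (1 - ρ)⁻¹ ≠ ⊤ := ENNReal.inv_ne_top.2 (tsub_pos_of_lt hρ1).ne'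
    finiteness
  intro f g hg hg0 E hE hfg x₀ t ht
  obtain ⟨z, hz⟩ := haj_pointwise e he f g hg hg0 E hE hfg x₀ t ht
  refine ⟨z, ?_⟩
  set h : EuclideanSpace ℝ (Fin n) → ℝ≥0∞ := fun y => ENNReal.ofReal (g y) ^ (1 / e) with hh
  have hm : Measurable h := (hg.ennreal_ofReal).pow_const _
  set I := ∫⁻ y in ball x₀ (2 * t), h y with hI
  set T := ENNReal.ofReal t with hT
  have hT0 : T ≠ 0 := by simpa [hT] using ht
  have hTt : T ≠ ⊤ := by simp [hT]
  have hTn0 : T ^ n ≠ 0 := pow_ne_zero _ hT0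
  have hTnt : T ^ n ≠ ⊤ := by finiteness
  set V := ((T ^ n)⁻¹ * I) with hV
  have hIV : T ^ n * V = I := by
    rw [hV, ← mul_assoc, ENNReal.mul_inv_cancel hTn0 hTnt, one_mul]
  have hVe : V * V ^ (e - 1) = V ^ e := by
    nth_rewrite 1 [← ENNReal.rpow_one V]
    rw [← ENNReal.rpow_add_of_nonneg _ _ (by norm_num) (by linarith)]; congr 1; ring
  have hterm : ∀ k : ℕ, ∫⁻ x in ball x₀ t, ENNReal.ofReal (t / 2 ^ k) * ((kap n)⁻¹ *
      ((ENNReal.ofReal (t / 2 ^ k) ^ n)⁻¹ * ∫⁻ y in ball x (t / 2 ^ k), h y)) ^ e ≤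
      (kap n)⁻¹ ^ e * kap n * (T * T ^ n * V ^ e) * ρ ^ k := by
    intro k
    have htk : 0 < t / 2 ^ k := by positivity
    have htk1 : t / 2 ^ k ≤ t := div_le_self ht.le (one_le_pow₀ (by norm_num))
    set τ := ENNReal.ofReal (t / 2 ^ k) with hτ
    have hτ0 : τ ≠ 0 := by simpa [hτ] using ht
    have hτt : τ ≠ ⊤ := by simp [hτ]
    have hτn0 : τ ^ n ≠ 0 := pow_ne_zero _ hτ0
    have hτnt : τ ^ n ≠ ⊤ := by finiteness
    have hτT : τ = T * 2⁻¹ ^ k := by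
      rw [hτ, hT, ENNReal.ofReal_div_of_pos (by positivity), ENNReal.ofReal_pow (by norm_num),
        div_eq_mul_inv, ENNReal.inv_pow]
      simp
    have hpt : ∀ x ∈ ball x₀ t, τ * ((kap n)⁻¹ * ((τ ^ n)⁻¹ * ∫⁻ y in ball x (t / 2 ^ k), h y)) ^ e ≤
        τ * ((kap n)⁻¹ ^ e * (((τ ^ n)⁻¹ * I) ^ (e - 1) * (τ ^ n)⁻¹)) *
          ∫⁻ y in ball x (t / 2 ^ k), h y := by
      intro x hx
      rw [ENNReal.mul_rpow_of_nonneg _ _ he0.le]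
      have hsub : ∫⁻ y in ball x (t / 2 ^ k), h y ≤ I := by
        apply lintegral_mono_set
        apply ball_subset_ball'
        have := mem_ball.1 hx
        linarith
      set w := ∫⁻ y in ball x (t / 2 ^ k), h y
      have h1 : ((τ ^ n)⁻¹ * w) ^ e = ((τ ^ n)⁻¹ * w) ^ (e - 1) * ((τ ^ n)⁻¹ * w) := by
        nth_rewrite 3 [← ENNReal.rpow_one ((τ ^ n)⁻¹ * w)]
        rw [← ENNReal.rpow_add_of_nonneg _ _ (by linarith) (by norm_num)]; congr 1; ring
      rw [h1]
      calc τ * ((kap n)⁻¹ ^ e * (((τ ^ n)⁻¹ * w) ^ (e - 1) * ((τ ^ n)⁻¹ * w)))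
          ≤ τ * ((kap n)⁻¹ ^ e * (((τ ^ n)⁻¹ * I) ^ (e - 1) * ((τ ^ n)⁻¹ * w))) := by
            have he1 : 0 ≤ e - 1 := by linarith
            gcongr
        _ = _ := by ring
    calc _ ≤ ∫⁻ x in ball x₀ t, τ * ((kap n)⁻¹ ^ e * (((τ ^ n)⁻¹ * I) ^ (e - 1) * (τ ^ n)⁻¹)) *
          ∫⁻ y in ball x (t / 2 ^ k), h y := setLIntegral_mono' measurableSet_ball hpt
      _ = τ * ((kap n)⁻¹ ^ e * (((τ ^ n)⁻¹ * I) ^ (e - 1) * (τ ^ n)⁻¹)) *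
          ∫⁻ x in ball x₀ t, ∫⁻ y in ball x (t / 2 ^ k), h y := by
          rw [lintegral_const_mul _ (meas_ball_int h hm _)]
      _ ≤ τ * ((kap n)⁻¹ ^ e * (((τ ^ n)⁻¹ * I) ^ (e - 1) * (τ ^ n)⁻¹)) *
          (τ ^ n * kap n * I) := by
          gcongr
          refine (int_ball_int h hm _ t htk x₀).trans ?_
          gcongr
          exact lintegral_mono_set (ball_subset_ball (by linarith))
      _ = (kap n)⁻¹ ^ e * kap n * (τ * (((τ ^ n)⁻¹ * I) ^ (e - 1) * I) * ((τ ^ n)⁻¹ * τ ^ n)) := by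
          ring
      _ = (kap n)⁻¹ ^ e * kap n * (τ * (((τ ^ n)⁻¹ * I) ^ (e - 1) * I)) := by
          rw [ENNReal.inv_mul_cancel hτn0 hτnt, mul_one]
      _ = (kap n)⁻¹ ^ e * kap n * (T * T ^ n * V ^ e) * ρ ^ k := by
          have h2 : (τ ^ n)⁻¹ * I = 2 ^ (k * n : ℝ) * V := by
            rw [hτT, mul_pow, ENNReal.mul_inv (Or.inl hTn0) (Or.inl hTnt), hV, ← pow_mul,
              ← ENNReal.inv_pow, inv_inv, show ((k:ℝ) * n) = ((k * n : ℕ) : ℝ) by push_cast; rfl,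
              ENNReal.rpow_natCast]
            ring
          have h3 : (2:ℝ≥0∞)⁻¹ ^ k * (2 ^ (k * n : ℝ)) ^ (e - 1) = ρ ^ k := by
            rw [hρ, ← ENNReal.rpow_natCast (2 ^ _), ← ENNReal.rpow_mul, ← ENNReal.rpow_mul,
              ← ENNReal.inv_pow, ← ENNReal.rpow_natCast, ← ENNReal.rpow_neg,
              ← ENNReal.rpow_add _ _ (by norm_num) (by norm_num)]
            congr 1; ring
          rw [h2, ENNReal.mul_rpow_of_nonneg _ _ (by linarith : 0 ≤ e - 1), hτT, ← hIV, ← h3, ← hVe]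
          ring
  have hmeas : ∀ k : ℕ, Measurable fun x => ENNReal.ofReal (t / 2 ^ k) * ((kap n)⁻¹ *
      ((ENNReal.ofReal (t / 2 ^ k) ^ n)⁻¹ * ∫⁻ y in ball x (t / 2 ^ k), h y)) ^ e := fun k =>
    ((((meas_ball_int h hm _).const_mul _).const_mul _).pow_const _).const_mul _
  have hb : ((T ^ n)⁻¹ * ∫⁻ y in ball x₀ t, h y) ≤ V := by
    rw [hV, hI]; gcongr; linarith
  calc ∫⁻ x in ball x₀ t, edist (f x) (f z) ≤ ∫⁻ x in ball x₀ t,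
      (10 * ∑' k : ℕ, ENNReal.ofReal (t / 2 ^ k) * ((kap n)⁻¹ * ((ENNReal.ofReal (t / 2 ^ k) ^ n)⁻¹ *
        ∫⁻ y in ball x (t / 2 ^ k), h y)) ^ e
      + 3 * (T * ((kap n)⁻¹ * ((T ^ n)⁻¹ * ∫⁻ y in ball x₀ t, h y)) ^ e)) := by
        apply lintegral_mono_ae
        have hE' : ∀ᵐ x ∂(volume.restrict (ball x₀ t)), x ∉ E :=
          ae_restrict_of_ae (measure_eq_zero_iff_ae_notMem.1 hE)
        filter_upwards [ae_restrict_mem measurableSet_ball, hE'] with x hx hx'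
        exact hz x hx hx'
    _ = 10 * (∑' k : ℕ, ∫⁻ x in ball x₀ t, ENNReal.ofReal (t / 2 ^ k) * ((kap n)⁻¹ *
        ((ENNReal.ofReal (t / 2 ^ k) ^ n)⁻¹ * ∫⁻ y in ball x (t / 2 ^ k), h y)) ^ e)
      + 3 * (T * ((kap n)⁻¹ * ((T ^ n)⁻¹ * ∫⁻ y in ball x₀ t, h y)) ^ e) * (T ^ n * kap n) := by
        rw [lintegral_add_right _ measurable_const, setLIntegral_const, vol_ball _ _ ht,
          lintegral_const_mul _ (Measurable.tsum hmeas),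
          lintegral_tsum fun k => (hmeas k).aemeasurable]
    _ ≤ 10 * (∑' k : ℕ, (kap n)⁻¹ ^ e * kap n * (T * T ^ n * V ^ e) * ρ ^ k)
      + 3 * (T * ((kap n)⁻¹ * V) ^ e) * (T ^ n * kap n) := by
        gcongr with k
        exact hterm k
    _ = _ := by
        rw [ENNReal.tsum_mul_left, ENNReal.tsum_geometric, ENNReal.mul_rpow_of_nonneg (kap n)⁻¹ V he0.le]
        clear_value V
        ring

/-- Convolution of real functions on Euclidean space. -/
def cv {n : ℕ} (f k : EuclideanSpace ℝ (Fin n) → ℝ) : EuclideanSpace ℝ (Fin n) → ℝ :=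
  convolution f k (ContinuousLinearMap.mul ℝ ℝ) volume

lemma cv_apply {n : ℕ} (f k : EuclideanSpace ℝ (Fin n) → ℝ) (x) :
    cv f k x = ∫ y, f y * k (x - y) := rfl

lemma cv_exists {n : ℕ} {f k : EuclideanSpace ℝ (Fin n) → ℝ} (hf : LocallyIntegrable f)
    (hk : Continuous k) (hkc : HasCompactSupport k) (x) : Integrable fun y => f y * k (x - y) :=
  hkc.convolutionExists_right (ContinuousLinearMap.mul ℝ ℝ) hf hk x

lemma cv_cont {n : ℕ} {f k : EuclideanSpace ℝ (Fin n) → ℝ} (hf : LocallyIntegrable f)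
    (hk : Continuous k) (hkc : HasCompactSupport k) : Continuous (cv f k) :=
  hkc.continuous_convolution_right (ContinuousLinearMap.mul ℝ ℝ) hf hk

lemma cv_cs {n : ℕ} {f k : EuclideanSpace ℝ (Fin n) → ℝ} (hfc : HasCompactSupport f)
    (hkc : HasCompactSupport k) : HasCompactSupport (cv f k) :=
  HasCompactSupport.convolution (ContinuousLinearMap.mul ℝ ℝ) hfc hkc

lemma cv_comm {n : ℕ} (f k : EuclideanSpace ℝ (Fin n) → ℝ) : cv f k = cv k f := by
  ext x
  rw [cv, convolution_mul_swap, cv_apply]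
  simp_rw [mul_comm]

lemma cv_assoc {n : ℕ} {f k l : EuclideanSpace ℝ (Fin n) → ℝ} (hf : LocallyIntegrable f)
    (hk : Continuous k) (hkc : HasCompactSupport k) (hl : Continuous l)
    (hlc : HasCompactSupport l) : cv (cv f k) l = cv f (cv k l) := by
  ext x
  apply convolution_assoc
  · intro x y z; simp [mul_assoc]
  · exact hf.aestronglyMeasurable
  · exact hk.aestronglyMeasurable
  · exact hl.aestronglyMeasurable
  · exact Filter.Eventually.of_forall fun y => hkc.convolutionExists_right _ hf hk y
  · exact Filter.Eventually.of_forall fun y =>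
      hlc.norm.convolutionExists_right _ hk.norm.locallyIntegrable hl.norm y
  · apply HasCompactSupport.convolutionExists_right
    · exact HasCompactSupport.convolution (ContinuousLinearMap.mul ℝ ℝ) hkc.norm hlc.norm
    · exact fun x => (hf x).norm
    · exact hlc.norm.continuous_convolution_right (ContinuousLinearMap.mul ℝ ℝ)
        hk.norm.locallyIntegrable hl.norm

lemma cv_sub_right {n : ℕ} {f k l : EuclideanSpace ℝ (Fin n) → ℝ} (hf : LocallyIntegrable f)
    (hk : Continuous k) (hkc : HasCompactSupport k) (hl : Continuous l)
    (hlc : HasCompactSupport l) (x) : cv f (fun z => k z - l z) x = cv f k x - cv f l x := by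
  simp only [cv_apply]
  rw [← integral_sub (cv_exists hf hk hkc x) (cv_exists hf hl hlc x)]
  simp_rw [mul_sub]

lemma cv_sub_left {n : ℕ} {f g k : EuclideanSpace ℝ (Fin n) → ℝ} (hf : LocallyIntegrable f)
    (hg : LocallyIntegrable g)
    (hk : Continuous k) (hkc : HasCompactSupport k) (x) :
    cv (fun z => f z - g z) k x = cv f k x - cv g k x := by
  simp only [cv_apply]
  rw [← integral_sub (cv_exists hf hk hkc x) (cv_exists hg hk hkc x)]
  simp_rw [sub_mul]

lemma cv_smul_right {n : ℕ} (f k : EuclideanSpace ℝ (Fin n) → ℝ) (c : ℝ) (x) :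
    cv f (fun z => c * k z) x = c * cv f k x := by
  simp only [cv_apply]
  rw [← integral_const_mul]
  congr 1; ext y; ring

lemma cv_hasFDerivAt {n : ℕ} {f k : EuclideanSpace ℝ (Fin n) → ℝ} (hf : LocallyIntegrable f)
    (hk : ContDiff ℝ 1 k) (hkc : HasCompactSupport k) (x) :
    ∃ D : EuclideanSpace ℝ (Fin n) →L[ℝ] ℝ, HasFDerivAt (cv f k) D x ∧
      ∀ v, D v = cv f (fun z => fderiv ℝ k z v) x :=
  ⟨_, hkc.hasFDerivAt_convolution_right _ hf hk x, fun v =>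
    convolution_precompR_apply _ hf (hkc.fderiv ℝ) (hk.continuous_fderiv one_ne_zero) x v⟩

lemma cv_fderiv_swap {n : ℕ} {k l : EuclideanSpace ℝ (Fin n) → ℝ}
    (hk : ContDiff ℝ 1 k) (hkc : HasCompactSupport k) (hl : ContDiff ℝ 1 l)
    (hlc : HasCompactSupport l) (v) :
    cv k (fun z => fderiv ℝ l z v) = cv (fun z => fderiv ℝ k z v) l := by
  ext x
  obtain ⟨D, hD, h1⟩ := cv_hasFDerivAt hk.continuous.locallyIntegrable hl hlc x
  obtain ⟨D', hD', h2⟩ := cv_hasFDerivAt hl.continuous.locallyIntegrable hk hkc x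
  rw [cv_comm] at hD
  rw [cv_comm (fun z => fderiv ℝ k z v) l, ← h1, ← h2, hD.unique hD']

/-- bound for a convolution with a bounded kernel supported in a ball -/
lemma cv_le {n : ℕ} (f k : EuclideanSpace ℝ (Fin n) → ℝ) (R K : ℝ)
    (hs : ∀ z, z ∉ ball 0 R → k z = 0) (hK : ∀ z, |k z| ≤ K) (x) :
    ENNReal.ofReal |cv f k x| ≤ ENNReal.ofReal K * ∫⁻ y in ball x R, ENNReal.ofReal |f y| := by
  have hK0 : 0 ≤ K := (abs_nonneg _).trans (hK 0)
  rw [cv_apply, ← Real.norm_eq_abs, ofReal_norm]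
  refine (enorm_integral_le_lintegral_enorm _).trans ?_
  rw [← lintegral_const_mul' _ _ (by simp), ← lintegral_indicator measurableSet_ball]
  apply lintegral_mono
  intro y
  show ‖f y * k (x - y)‖ₑ ≤ _
  by_cases hy : y ∈ ball x R
  · rw [indicator_of_mem hy, enorm_mul, mul_comm, ← ofReal_norm, ← ofReal_norm]
    simp only [Real.norm_eq_abs]
    gcongr
    exact hK _
  · rw [hs (x - y)]
    · simp
    · simpa [mem_ball, dist_eq_norm, norm_sub_rev] using hy

/-- lemma 1 -/
lemma cv_avg {n : ℕ} {v k : EuclideanSpace ℝ (Fin n) → ℝ} (hv : LocallyIntegrable v)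
    (hk : Continuous k) (hkc : HasCompactSupport k) (R : ℝ)
    (hs : ∀ z, z ∉ ball 0 R → k z = 0) (h1 : ∫ z, k z = 1) (x) (c ε : ℝ)
    (h : ∀ z ∈ ball x R, |v z - c| ≤ ε) :
    |cv v k x - c| ≤ (∫ z, |k z|) * ε := by
  have hki := hk.integrable_of_hasCompactSupport hkc (μ := volume)
  have hc : c = ∫ y, c * k (x - y) := by
    rw [integral_const_mul, integral_sub_left_eq_self k, h1, mul_one]
  have hki' : Integrable fun y => k (x - y) := hki.comp_sub_left x
  rw [cv_apply]
  nth_rewrite 1 [hc]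
  rw [← integral_sub (cv_exists hv hk hkc x) (hki'.const_mul c)]
  refine (abs_integral_le_integral_abs).trans ?_
  rw [← integral_sub_left_eq_self (fun z => |k z|) _ x, ← integral_mul_const]
  apply integral_mono_of_nonneg (Filter.Eventually.of_forall fun _ => abs_nonneg _)
  · exact hki'.abs.mul_const _
  · refine Filter.Eventually.of_forall fun y => ?_
    show |v y * k (x - y) - c * k (x - y)| ≤ |k (x - y)| * ε
    rw [← sub_mul, abs_mul, mul_comm]
    by_cases hy : y ∈ ball x R
    · have := h y hy
      gcongr
    · rw [hs (x - y)]
      · simp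
      · simpa [mem_ball, dist_eq_norm, norm_sub_rev] using hy

/-- the dilated bump -/
def psc {n : ℕ} (ψ : EuclideanSpace ℝ (Fin n) → ℝ) (s : ℝ) (z : EuclideanSpace ℝ (Fin n)) : ℝ :=
  (s⁻¹) ^ n * ψ (s⁻¹ • z)

/-- the derivative of the dilated bump -/
def dps {n : ℕ} (ψ : EuclideanSpace ℝ (Fin n) → ℝ) (j : Fin n) (s : ℝ)
    (z : EuclideanSpace ℝ (Fin n)) : ℝ :=
  (s⁻¹) ^ (n + 1) * fderiv ℝ ψ (s⁻¹ • z) (EuclideanSpace.single j 1)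

lemma smul_notMem {n : ℕ} {s : ℝ} (hs : 0 < s) {z : EuclideanSpace ℝ (Fin n)}
    (hz : z ∉ ball 0 s) : s⁻¹ • z ∉ ball (0 : EuclideanSpace ℝ (Fin n)) 1 := by
  rw [mem_ball_zero_iff, not_lt] at *
  rw [norm_smul, Real.norm_of_nonneg (inv_nonneg.2 hs.le)]
  rw [← inv_mul_cancel₀ hs.ne']
  gcongr

/-- the standing assumptions on the bump -/
structure IsBump {n : ℕ} (ψ : EuclideanSpace ℝ (Fin n) → ℝ) : Prop where
  smooth : ContDiff ℝ (⊤ : ℕ∞) ψ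
  supp : tsupport ψ ⊆ ball 0 1
  int : ∫ x, ψ x = 1

namespace IsBump
variable {n : ℕ} {ψ : EuclideanSpace ℝ (Fin n) → ℝ}

lemma contDiff1 (h : IsBump ψ) : ContDiff ℝ 1 ψ := h.smooth.of_le (by exact_mod_cast le_top)

lemma cs (h : IsBump ψ) : HasCompactSupport ψ :=
  (isCompact_closedBall (0 : EuclideanSpace ℝ (Fin n)) 1).of_isClosed_subset (isClosed_tsupport ψ)
    (h.supp.trans ball_subset_closedBall)

lemma zero_out (h : IsBump ψ) {z} (hz : z ∉ ball (0 : EuclideanSpace ℝ (Fin n)) 1) : ψ z = 0 :=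
  image_eq_zero_of_notMem_tsupport fun h' => hz (h.supp h')

lemma fderiv_zero_out (h : IsBump ψ) {z} (hz : z ∉ ball (0 : EuclideanSpace ℝ (Fin n)) 1) :
    fderiv ℝ ψ z = 0 :=
  image_eq_zero_of_notMem_tsupport fun h' => hz (h.supp (tsupport_fderiv_subset ℝ h'))

lemma psc_contDiff (h : IsBump ψ) (s : ℝ) : ContDiff ℝ 1 (psc ψ s) := by
  have := h.contDiff1
  unfold psc; fun_prop

lemma psc_cont (h : IsBump ψ) (s : ℝ) : Continuous (psc ψ s) := (h.psc_contDiff s).continuous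

lemma psc_zero (h : IsBump ψ) {s : ℝ} (hs : 0 < s) (z) (hz : z ∉ ball 0 s) : psc ψ s z = 0 := by
  rw [psc, h.zero_out (smul_notMem hs hz), mul_zero]

lemma psc_cs (h : IsBump ψ) {s : ℝ} (hs : 0 < s) : HasCompactSupport (psc ψ s) :=
  HasCompactSupport.intro (isCompact_closedBall 0 s) fun z hz =>
    h.psc_zero hs z fun h' => hz (ball_subset_closedBall h')

lemma psc_int (h : IsBump ψ) {s : ℝ} (hs : 0 < s) : ∫ z, psc ψ s z = 1 := by
  unfold psc
  rw [integral_const_mul, Measure.integral_comp_inv_smul_of_nonneg _ _ hs.le, h.int]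
  simp [hs.ne']

lemma psc_abs_int {s : ℝ} (hs : 0 < s) : ∫ z, |psc ψ s z| = ∫ z, |ψ z| := by
  unfold psc
  simp_rw [abs_mul, abs_pow, abs_inv, abs_of_pos hs]
  rw [integral_const_mul, Measure.integral_comp_inv_smul_of_nonneg _ (fun z => |ψ z|) hs.le]
  simp [hs.ne']

lemma psc_fderiv (h : IsBump ψ) (s : ℝ) (j : Fin n) (z) :
    fderiv ℝ (psc ψ s) z (EuclideanSpace.single j 1) = dps ψ j s z := by
  have h1 : HasFDerivAt ψ (fderiv ℝ ψ (s⁻¹ • z)) (s⁻¹ • z) :=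
    (h.contDiff1.differentiable one_ne_zero _).hasFDerivAt
  have h2 : HasFDerivAt (fun z : EuclideanSpace ℝ (Fin n) => s⁻¹ • z)
    (s⁻¹ • ContinuousLinearMap.id ℝ _) z := (hasFDerivAt_id z).const_smul s⁻¹
  have h3 := (h1.comp z h2).const_mul ((s⁻¹) ^ n)
  have h4 : fderiv ℝ (psc ψ s) z = _ := h3.fderiv
  rw [h4, dps]
  simp
  ring

lemma dps_eq (h : IsBump ψ) (s : ℝ) (j : Fin n) :
    (fun z => fderiv ℝ (psc ψ s) z (EuclideanSpace.single j 1)) = dps ψ j s :=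
  funext (h.psc_fderiv s j)

lemma dps_cont (h : IsBump ψ) (j : Fin n) (s : ℝ) : Continuous (dps ψ j s) := by
  have := h.contDiff1.continuous_fderiv one_ne_zero
  unfold dps; fun_prop

lemma dps_zero (h : IsBump ψ) (j : Fin n) {s : ℝ} (hs : 0 < s) (z) (hz : z ∉ ball 0 s) :
    dps ψ j s z = 0 := by
  rw [dps, h.fderiv_zero_out (smul_notMem hs hz)]; simp

lemma dps_cs (h : IsBump ψ) (j : Fin n) {s : ℝ} (hs : 0 < s) : HasCompactSupport (dps ψ j s) :=
  HasCompactSupport.intro (isCompact_closedBall 0 s) fun z hz =>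
    h.dps_zero j hs z fun h' => hz (ball_subset_closedBall h')

lemma dps_int (h : IsBump ψ) (j : Fin n) {s : ℝ} (hs : 0 < s) : ∫ z, dps ψ j s z = 0 := by
  have := integral_mul_fderiv_eq_neg_fderiv_mul_of_integrable (μ := volume)
    (f := fun _ : EuclideanSpace ℝ (Fin n) => (1:ℝ)) (g := psc ψ s)
    (v := EuclideanSpace.single j 1) (by simp)
    (by
      simp only [one_mul, h.psc_fderiv]
      exact (h.dps_cont j s).integrable_of_hasCompactSupport (h.dps_cs j hs))
    (by
      simp only [one_mul]
      exact (h.psc_cont s).integrable_of_hasCompactSupport (h.psc_cs hs))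
    (by fun_prop) (fun x _ => (h.psc_contDiff s).differentiable one_ne_zero x)
  simpa [h.psc_fderiv] using this

lemma bound (h : IsBump ψ) : ∃ K : ℝ, 1 ≤ K ∧ (∀ z, |ψ z| ≤ K) ∧ (∀ z, ‖fderiv ℝ ψ z‖ ≤ K) ∧
    (∫ z, |ψ z|) ≤ K ∧ ∀ j z, |fderiv ℝ ψ z (EuclideanSpace.single j 1)| ≤ K := by
  obtain ⟨K₁, h1⟩ := h.cs.exists_bound_of_continuous h.contDiff1.continuous
  obtain ⟨K₂, h2⟩ := (h.cs.fderiv ℝ).exists_bound_of_continuous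
    (h.contDiff1.continuous_fderiv one_ne_zero)
  have h3 : ∀ z, ‖fderiv ℝ ψ z‖ ≤ max (max 1 K₁) (max K₂ (∫ z, |ψ z|)) := fun z =>
    (h2 z).trans ((le_max_left _ _).trans (le_max_right _ _))
  refine ⟨max (max 1 K₁) (max K₂ (∫ z, |ψ z|)), ?_, fun z => ?_, h3, ?_, fun j z => ?_⟩
  · exact (le_max_left _ _).trans (le_max_left _ _)
  · exact (h1 z).trans ((le_max_right _ _).trans (le_max_left _ _))
  · exact (le_max_right _ _).trans (le_max_right _ _)
  · refine le_trans ?_ (h3 z)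
    simpa using (fderiv ℝ ψ z).le_opNorm (EuclideanSpace.single j 1)

lemma psc_le {K : ℝ} (h1 : ∀ z, |ψ z| ≤ K) {s : ℝ} (hs : 0 < s) (z) :
    |psc ψ s z| ≤ (s⁻¹) ^ n * K := by
  rw [psc, abs_mul, abs_of_pos (by positivity)]; gcongr; exact h1 _

lemma dps_le {K : ℝ} (j : Fin n) (h1 : ∀ z, |fderiv ℝ ψ z (EuclideanSpace.single j 1)| ≤ K) {s : ℝ}
    (hs : 0 < s) (z) : |dps ψ j s z| ≤ (s⁻¹) ^ (n + 1) * K := by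
  rw [dps, abs_mul, abs_of_pos (by positivity)]; gcongr; exact h1 _

end IsBump

lemma smoothMax_eq {n : ℕ} (ψ f : EuclideanSpace ℝ (Fin n) → ℝ) (j : Fin n) (x) :
    smoothMax n ψ f j x = ⨆ t : {s : ℝ // 0 < s}, ENNReal.ofReal |cv f (dps ψ j t.1) x| := by
  unfold smoothMax
  congr 1; ext t
  rw [cv_apply]
  unfold dps
  have : ∀ y, f y * ((t.1⁻¹) ^ (n+1) * fderiv ℝ ψ (t.1⁻¹ • (x - y)) (EuclideanSpace.single j 1)) =
    (t.1⁻¹) ^ (n+1) * (f y * fderiv ℝ ψ (t.1⁻¹ • (x - y)) (EuclideanSpace.single j 1)) := by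
    intro y; ring
  simp_rw [this]
  rw [integral_const_mul, abs_mul, abs_of_pos (pow_pos (inv_pos.2 t.2) _)]

lemma le_smoothMax {n : ℕ} (ψ f : EuclideanSpace ℝ (Fin n) → ℝ) (j : Fin n) (x) {s : ℝ}
    (hs : 0 < s) : ENNReal.ofReal |cv f (dps ψ j s) x| ≤ smoothMax n ψ f j x := by
  rw [smoothMax_eq]
  exact le_iSup (fun t : {s : ℝ // 0 < s} => ENNReal.ofReal |cv f (dps ψ j t.1) x|) ⟨s, hs⟩

lemma smoothMax_meas {n : ℕ} {ψ f : EuclideanSpace ℝ (Fin n) → ℝ} (h : IsBump ψ)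
    (hf : LocallyIntegrable f) (j : Fin n) : Measurable (smoothMax n ψ f j) := by
  apply LowerSemicontinuous.measurable
  have : smoothMax n ψ f j = fun x => ⨆ t : {s : ℝ // 0 < s},
      ENNReal.ofReal |cv f (dps ψ j t.1) x| := funext (smoothMax_eq ψ f j)
  rw [this]
  apply lowerSemicontinuous_iSup
  intro t
  apply Continuous.lowerSemicontinuous
  exact ENNReal.continuous_ofReal.comp
    (continuous_abs.comp (cv_cont hf (h.dps_cont j t.1) (h.dps_cs j t.2)))

lemma cv_sub_const {n : ℕ} {f k : EuclideanSpace ℝ (Fin n) → ℝ} (hf : LocallyIntegrable f)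
    (hk : Continuous k) (hkc : HasCompactSupport k) (h0 : ∫ z, k z = 0) (c : ℝ) (x) :
    cv (fun z => f z - c) k x = cv f k x := by
  rw [cv_sub_left hf (locallyIntegrable_const c) hk hkc]
  have : cv (fun _ => c) k x = 0 := by
    rw [cv_apply, integral_const_mul, integral_sub_left_eq_self k, h0, mul_zero]
  rw [this, sub_zero]

lemma dirA_pointwise {n : ℕ} (hn : 1 ≤ n) {ψ : EuclideanSpace ℝ (Fin n) → ℝ} (hb : IsBump ψ)
    (q : ℝ) (hq1 : (n : ℝ) / (n + 1) < q) (hq2 : q < 1) :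
    ∃ C : ℝ≥0∞, C ≠ ⊤ ∧ ∀ f g : EuclideanSpace ℝ (Fin n) → ℝ, LocallyIntegrable f →
      IsHajlaszGradientOn n f g univ → ∀ j x,
      smoothMax n ψ f j x ≤ C * (UM (fun y => ENNReal.ofReal (g y) ^ q) x) ^ (1 / q) := by
  have hq0 : 0 < q := lt_of_le_of_lt (by positivity) hq1
  have hnq : (n : ℝ) < q * (n + 1) := (div_lt_iff₀ (by positivity)).1 hq1
  obtain ⟨K, hK1, -, -, -, hK⟩ := hb.bound
  obtain ⟨C₀, hC₀, H⟩ := haj_poincare hn (1 / q) ((one_le_div hq0).2 hq2.le) (by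
    rw [div_sub_one hq0.ne', ← mul_div_assoc, div_lt_one hq0]; linarith)
  refine ⟨ENNReal.ofReal K * C₀ * (2 ^ n) ^ (1 / q), by finiteness, ?_⟩
  rintro f g hf ⟨hg, hg0, E, hE, hfg⟩ j x
  rw [smoothMax_eq]
  refine iSup_le fun ⟨t, ht⟩ => ?_
  obtain ⟨z, hz⟩ := H f g hg hg0 E hE
    (fun x hx y hy => hfg x ⟨mem_univ _, hx⟩ y ⟨mem_univ _, hy⟩) x t ht
  simp only [one_div_one_div] at hz
  set h : EuclideanSpace ℝ (Fin n) → ℝ≥0∞ := fun y => ENNReal.ofReal (g y) ^ q with hh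
  have hU := le_UM h x x (2 * t) (by positivity) (mem_ball_self (by positivity))
  have hcv := cv_le (fun y => f y - f z) (dps ψ j t) t ((t⁻¹) ^ (n + 1) * K)
    (fun z hz => hb.dps_zero j ht z hz) (IsBump.dps_le j (hK j) ht) x
  rw [cv_sub_const hf (hb.dps_cont j t) (hb.dps_cs j ht) (hb.dps_int j ht)] at hcv
  refine hcv.trans ?_
  have h1 : ∫⁻ y in ball x t, ENNReal.ofReal |f y - f z| = ∫⁻ y in ball x t, edist (f y) (f z) := by
    simp_rw [edist_dist, Real.dist_eq]
  rw [h1]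
  set T := ENNReal.ofReal t with hT
  have hT0 : T ≠ 0 := by simpa [hT] using ht
  have hTt : T ≠ ⊤ := by simp [hT]
  have hTn0 : T ^ n ≠ 0 := pow_ne_zero _ hT0
  have hTnt : T ^ n ≠ ⊤ := by finiteness
  set I := ∫⁻ y in ball x (2 * t), h y with hI
  have hV : (T ^ n)⁻¹ * I ≤ 2 ^ n * UM h x := by
    refine le_trans (le_of_eq ?_) (mul_le_mul_right hU (2 ^ n))
    rw [ENNReal.ofReal_mul (by norm_num), mul_pow, ENNReal.mul_inv (Or.inr hTnt) (Or.inr hTn0)]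
    rw [← mul_assoc, ← mul_assoc]
    simp only [ENNReal.ofReal_ofNat]
    rw [ENNReal.mul_inv_cancel (by simp) (by finiteness), one_mul]
  have hT1 : ENNReal.ofReal ((t⁻¹) ^ (n + 1) * K) = (T ^ (n + 1))⁻¹ * ENNReal.ofReal K := by
    rw [ENNReal.ofReal_mul (by positivity), ENNReal.ofReal_pow (by positivity),
      ENNReal.ofReal_inv_of_pos ht, ENNReal.inv_pow]
  calc _ ≤ (T ^ (n + 1))⁻¹ * ENNReal.ofReal K * (C₀ * (T * T ^ n * (2 ^ n * UM h x) ^ (1 / q))) := by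
        rw [hT1]
        gcongr
        refine hz.trans ?_
        gcongr
    _ = ((T ^ (n + 1))⁻¹ * T ^ (n + 1)) * (ENNReal.ofReal K * C₀ * (2 ^ n * UM h x) ^ (1 / q)) := by
        ring
    _ = _ := by
        rw [ENNReal.inv_mul_cancel (pow_ne_zero _ hT0) (by finiteness), one_mul,
          ENNReal.mul_rpow_of_nonneg _ _ (by positivity), mul_assoc, mul_assoc, mul_assoc]

lemma dirA {n : ℕ} (hn : 1 ≤ n) {ψ : EuclideanSpace ℝ (Fin n) → ℝ} (hb : IsBump ψ)
    (p : ℝ) (hp1 : (n : ℝ) / (n + 1) < p) (hp2 : p ≤ 1) :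
    ∃ C : ℝ≥0∞, C ≠ ⊤ ∧ ∀ f g : EuclideanSpace ℝ (Fin n) → ℝ, LocallyIntegrable f →
      IsHajlaszGradientOn n f g univ → ∀ j,
      (∫⁻ x, smoothMax n ψ f j x ^ p) ^ (1 / p) ≤ C * lpNorm n p g volume := by
  obtain ⟨q, hq1, hq2⟩ := exists_between hp1
  have hq0 : 0 < q := lt_of_le_of_lt (by positivity) hq1
  have hp0 : 0 < p := hq0.trans hq2
  obtain ⟨C₁, hC₁, H₁⟩ := dirA_pointwise hn hb q hq1 (hq2.trans_le hp2)
  obtain ⟨C₂, hC₂, H₂⟩ := UM_Lp hn q p hq0 hq2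
  refine ⟨C₁ * C₂, by finiteness, ?_⟩
  intro f g hf hg j
  have hgm : Measurable fun y => ENNReal.ofReal (g y) := hg.1.ennreal_ofReal
  have h2 := H₂ _ hgm
  set W := fun x => (UM (fun y => ENNReal.ofReal (g y) ^ q) x) ^ (1 / q) with hW
  have hWm : Measurable W := (UM_meas _).pow_const _
  calc (∫⁻ x, smoothMax n ψ f j x ^ p) ^ (1 / p) ≤ (∫⁻ x, (C₁ * W x) ^ p) ^ (1 / p) := by
        gcongr with x
        exact H₁ f g hf hg j x
    _ = C₁ * (∫⁻ x, W x ^ p) ^ (1 / p) := by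
        simp_rw [ENNReal.mul_rpow_of_nonneg _ _ hp0.le]
        rw [lintegral_const_mul _ (hWm.pow_const _), ENNReal.mul_rpow_of_nonneg _ _ (by positivity),
          ← ENNReal.rpow_mul, mul_one_div_cancel hp0.ne', ENNReal.rpow_one]
    _ ≤ C₁ * (C₂ * (∫⁻ x, ENNReal.ofReal (g x) ^ p) ^ (1 / p)) := by gcongr
    _ = _ := by
        unfold _root_.lpNorm
        simp_rw [abs_of_nonneg (hg.2.1 _)]
        rw [mul_assoc]

lemma cv_swap {n : ℕ} {ψ f : EuclideanSpace ℝ (Fin n) → ℝ} (hb : IsBump ψ)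
    (hf : LocallyIntegrable f) (j : Fin n) {a b : ℝ} (ha : 0 < a) (hb' : 0 < b) :
    cv (cv f (dps ψ j a)) (psc ψ b) = cv (cv f (dps ψ j b)) (psc ψ a) := by
  rw [cv_assoc hf (hb.dps_cont j a) (hb.dps_cs j ha) (hb.psc_cont b) (hb.psc_cs hb'),
    cv_assoc hf (hb.dps_cont j b) (hb.dps_cs j hb') (hb.psc_cont a) (hb.psc_cs ha)]
  have := cv_fderiv_swap (hb.psc_contDiff a) (hb.psc_cs ha) (hb.psc_contDiff b) (hb.psc_cs hb')
    (EuclideanSpace.single j 1)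
  rw [hb.dps_eq, hb.dps_eq] at this
  rw [← this, cv_comm (psc ψ a)]

/-- the error kernel -/
def Dk {n : ℕ} (ψ : EuclideanSpace ℝ (Fin n) → ℝ) (s a : ℝ) (z : EuclideanSpace ℝ (Fin n)) : ℝ :=
  psc ψ s z - cv (psc ψ s) (psc ψ a) z

lemma Dk_cont {n : ℕ} {ψ : EuclideanSpace ℝ (Fin n) → ℝ} (hb : IsBump ψ) {s a : ℝ}
    (ha : 0 < a) : Continuous (Dk ψ s a) :=
  (hb.psc_cont s).sub (cv_cont (hb.psc_cont s).locallyIntegrable (hb.psc_cont a) (hb.psc_cs ha))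

lemma Dk_zero {n : ℕ} {ψ : EuclideanSpace ℝ (Fin n) → ℝ} (hb : IsBump ψ) {s a : ℝ}
    (hs : 0 < s) (ha : 0 < a) (has : a ≤ s) (z) (hz : z ∉ ball 0 (2 * s)) : Dk ψ s a z = 0 := by
  rw [mem_ball_zero_iff, not_lt] at hz
  unfold Dk
  rw [hb.psc_zero hs z (by rw [mem_ball_zero_iff, not_lt]; linarith), cv_apply, zero_sub,
    neg_eq_zero, ← integral_zero (EuclideanSpace ℝ (Fin n)) ℝ]
  congr 1; ext y
  by_cases hy : y ∈ ball 0 s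
  · rw [hb.psc_zero ha (z - y), mul_zero]
    rw [mem_ball_zero_iff] at hy
    rw [mem_ball_zero_iff, not_lt]
    have := norm_sub_norm_le z y
    linarith
  · rw [hb.psc_zero hs y hy, zero_mul]

lemma psc_lip {n : ℕ} {ψ : EuclideanSpace ℝ (Fin n) → ℝ} (hb : IsBump ψ) {K : ℝ}
    (hK : ∀ z, ‖fderiv ℝ ψ z‖ ≤ K) {s : ℝ} (hs : 0 < s) (z w) :
    |psc ψ s z - psc ψ s w| ≤ (s⁻¹) ^ n * K * (s⁻¹ * ‖z - w‖) := by
  have := Convex.norm_image_sub_le_of_norm_fderiv_le (𝕜 := ℝ) (f := ψ) (s := univ)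
    (x := s⁻¹ • w) (y := s⁻¹ • z) (C := K)
    (fun x _ => hb.contDiff1.differentiable one_ne_zero x) (fun x _ => hK x) convex_univ
    (mem_univ _) (mem_univ _)
  rw [← smul_sub, norm_smul, Real.norm_of_nonneg (inv_nonneg.2 hs.le)] at this
  rw [psc, psc, ← mul_sub, abs_mul, abs_of_pos (by positivity), mul_assoc]
  gcongr
  exact this

lemma Dk_le {n : ℕ} {ψ : EuclideanSpace ℝ (Fin n) → ℝ} (hb : IsBump ψ) {K : ℝ} (hK0 : 0 ≤ K)
    (hK : ∀ z, ‖fderiv ℝ ψ z‖ ≤ K) (hKi : ∫ z, |ψ z| ≤ K) {s a : ℝ} (hs : 0 < s) (ha : 0 < a) (z) :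
    |Dk ψ s a z| ≤ K ^ 2 * (s⁻¹) ^ n * (a / s) := by
  have h := cv_avg (hb.psc_cont s).locallyIntegrable (hb.psc_cont a) (hb.psc_cs ha) a
    (hb.psc_zero ha) (hb.psc_int ha) z (psc ψ s z) ((s⁻¹) ^ n * K * (s⁻¹ * a)) (by
      intro w hw
      refine (psc_lip hb hK hs w z).trans ?_
      rw [mem_ball, dist_eq_norm] at hw
      gcongr)
  rw [IsBump.psc_abs_int ha] at h
  unfold Dk
  rw [abs_sub_comm]
  refine h.trans ?_
  calc _ ≤ K * ((s⁻¹) ^ n * K * (s⁻¹ * a)) := by gcongr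
    _ = _ := by ring

/-- approximations -/
def Pk {n : ℕ} (ψ w : EuclideanSpace ℝ (Fin n) → ℝ) (a : ℝ) (y : EuclideanSpace ℝ (Fin n)) : ℝ :=
  2 * cv w (psc ψ a) y - cv (cv w (psc ψ a)) (psc ψ a) y

lemma Pk_lim {n : ℕ} {ψ w : EuclideanSpace ℝ (Fin n) → ℝ} (hb : IsBump ψ) (hw : Continuous w)
    (y) (a : ℕ → ℝ) (ha : ∀ k, 0 < a k) (hlim : Filter.Tendsto a Filter.atTop (nhds 0)) :
    Filter.Tendsto (fun k => Pk ψ w (a k) y) Filter.atTop (nhds (w y)) := by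
  obtain ⟨K, hK1, -, -, hKi, -⟩ := hb.bound
  rw [Metric.tendsto_nhds]
  intro ε hε
  set η := ε / (2 * (2 * K + K ^ 2)) with hη
  have hη0 : 0 < η := by positivity
  obtain ⟨δ, hδ, hδw⟩ := Metric.continuousAt_iff.1 hw.continuousAt η hη0
  have hsm : ∀ᶠ k in Filter.atTop, a k < δ / 2 := hlim.eventually_lt_const (by positivity)
  filter_upwards [hsm] with k hk
  have h1 : ∀ z ∈ ball y (a k), |cv w (psc ψ (a k)) z - w y| ≤ K * η := by
    intro z hz
    have := cv_avg hw.locallyIntegrable (hb.psc_cont (a k)) (hb.psc_cs (ha k)) (a k)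
      (hb.psc_zero (ha k)) (hb.psc_int (ha k)) z (w y) η (by
        intro u hu
        rw [← Real.dist_eq]
        refine (hδw ?_).le
        have := dist_triangle u z y
        have := mem_ball.1 hu
        have := mem_ball.1 hz
        linarith)
    rw [IsBump.psc_abs_int (ha k)] at this
    refine this.trans ?_
    gcongr
  have h2 := cv_avg (cv_cont hw.locallyIntegrable (hb.psc_cont (a k))
      (hb.psc_cs (ha k))).locallyIntegrable (hb.psc_cont (a k)) (hb.psc_cs (ha k)) (a k)
      (hb.psc_zero (ha k)) (hb.psc_int (ha k)) y (w y) (K * η) h1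
  rw [IsBump.psc_abs_int (ha k)] at h2
  have h3 := h1 y (mem_ball_self (ha k))
  have h4 : (∫ z, |ψ z|) * (K * η) ≤ K * (K * η) := by gcongr
  have h5 : ε = 2 * (2 * (K * η) + K * (K * η)) := by
    rw [hη]; field_simp
  rw [Real.dist_eq, Pk]
  rw [abs_le] at h3 h2
  rw [abs_lt]
  constructor <;> linarith [h3.1, h3.2, h2.1, h2.2]

lemma cv_Dk {n : ℕ} {ψ v : EuclideanSpace ℝ (Fin n) → ℝ} (hb : IsBump ψ)
    (hv : LocallyIntegrable v) {s a : ℝ} (hs : 0 < s) (ha : 0 < a) (y) :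
    cv v (Dk ψ s a) y = cv v (psc ψ s) y - cv (cv v (psc ψ s)) (psc ψ a) y := by
  unfold Dk
  rw [cv_sub_right hv (hb.psc_cont s) (hb.psc_cs hs)
    (cv_cont (hb.psc_cont s).locallyIntegrable (hb.psc_cont a) (hb.psc_cs ha))
    (cv_cs (hb.psc_cs hs) (hb.psc_cs ha)),
    cv_assoc hv (hb.psc_cont s) (hb.psc_cs hs) (hb.psc_cont a) (hb.psc_cs ha)]

lemma cv_psc_comm {n : ℕ} {ψ v : EuclideanSpace ℝ (Fin n) → ℝ} (hb : IsBump ψ)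
    (hv : LocallyIntegrable v) {s a : ℝ} (hs : 0 < s) (ha : 0 < a) :
    cv (cv v (psc ψ s)) (psc ψ a) = cv (cv v (psc ψ a)) (psc ψ s) := by
  rw [cv_assoc hv (hb.psc_cont s) (hb.psc_cs hs) (hb.psc_cont a) (hb.psc_cs ha), cv_comm (psc ψ s),
   cv_assoc hv (hb.psc_cont a) (hb.psc_cs ha) (hb.psc_cont s) (hb.psc_cs hs)]

lemma Pk_diff {n : ℕ} {ψ f : EuclideanSpace ℝ (Fin n) → ℝ} (hb : IsBump ψ)
    (hf : LocallyIntegrable f) (j : Fin n) {s a b : ℝ} (hs : 0 < s) (ha : 0 < a) (hb' : 0 < b) (y) :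
    Pk ψ (cv f (dps ψ j s)) b y - Pk ψ (cv f (dps ψ j s)) a y =
      (cv (cv f (dps ψ j b)) (Dk ψ s a) y + cv (cv f (dps ψ j b)) (Dk ψ s b) y) -
      (cv (cv f (dps ψ j a)) (Dk ψ s a) y + cv (cv f (dps ψ j a)) (Dk ψ s b) y) := by
  have hL : ∀ {t : ℝ}, 0 < t → LocallyIntegrable (cv f (dps ψ j t)) := fun {t} ht =>
    (cv_cont hf (hb.dps_cont j t) (hb.dps_cs j ht)).locallyIntegrable
  rw [cv_Dk hb (hL hb') hs ha, cv_Dk hb (hL hb') hs hb', cv_Dk hb (hL ha) hs ha,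
    cv_Dk hb (hL ha) hs hb', Pk, Pk, cv_swap hb hf j hb' hs, cv_swap hb hf j ha hs,
    cv_psc_comm hb (hL hs) hb' ha]
  ring

lemma Pk_eq {n : ℕ} {ψ f : EuclideanSpace ℝ (Fin n) → ℝ} (hb : IsBump ψ)
    (hf : LocallyIntegrable f) (j : Fin n) {s a : ℝ} (hs : 0 < s) (ha : 0 < a) (y) :
    Pk ψ (cv f (dps ψ j s)) a y =
      cv (cv f (dps ψ j a)) (psc ψ s) y + cv (cv f (dps ψ j a)) (Dk ψ s a) y := by
  have hL : ∀ {t : ℝ}, 0 < t → LocallyIntegrable (cv f (dps ψ j t)) := fun {t} ht =>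
    (cv_cont hf (hb.dps_cont j t) (hb.dps_cs j ht)).locallyIntegrable
  rw [cv_Dk hb (hL ha) hs ha, Pk, cv_swap hb hf j ha hs]
  ring

lemma ofReal_abs_four (a b c d : ℝ) : ENNReal.ofReal |(a + b) - (c + d)| ≤
    (ENNReal.ofReal |a| + ENNReal.ofReal |b|) + (ENNReal.ofReal |c| + ENNReal.ofReal |d|) := by
  rw [← ENNReal.ofReal_add (by positivity) (by positivity),
    ← ENNReal.ofReal_add (by positivity) (by positivity),
    ← ENNReal.ofReal_add (by positivity) (by positivity)]
  apply ENNReal.ofReal_le_ofReal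
  refine (abs_sub _ _).trans ?_
  gcongr <;> exact abs_add_le _ _

lemma star {n : ℕ} {ψ : EuclideanSpace ℝ (Fin n) → ℝ} (hb : IsBump ψ) :
    ∃ C : ℝ≥0∞, C ≠ ⊤ ∧ ∀ f : EuclideanSpace ℝ (Fin n) → ℝ, LocallyIntegrable f → ∀ j,
      ∀ s, 0 < s → ∀ y, ENNReal.ofReal |cv f (dps ψ j s) y| ≤
        C * ∑' k : ℕ, 2⁻¹ ^ k * ((ENNReal.ofReal s ^ n)⁻¹ * ∫⁻ z in ball y (2 * s),
          ENNReal.ofReal |cv f (dps ψ j (s / 2 ^ (k + 1))) z|) := by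
  obtain ⟨K, hK1, hK, hKd, hKi, -⟩ := hb.bound
  have hK0 : 0 ≤ K := by linarith
  refine ⟨ENNReal.ofReal K + 7 * ENNReal.ofReal (K ^ 2), by finiteness, ?_⟩
  intro f hf j s hs y
  set S := ENNReal.ofReal s with hS
  set a : ℕ → ℝ := fun k => s / 2 ^ (k + 1) with ha
  have ha0 : ∀ k, 0 < a k := fun k => by simp only [ha]; positivity
  have has : ∀ k, a k ≤ s := fun k => div_le_self hs.le (one_le_pow₀ (by norm_num))
  have halim : Filter.Tendsto a Filter.atTop (nhds 0) := by
    have := (_root_.tendsto_pow_atTop_nhds_zero_of_lt_one (r := (1/2:ℝ)) (by norm_num)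
      (by norm_num)).const_mul (s / 2)
    rw [mul_zero] at this
    refine this.congr fun k => ?_
    simp only [ha]; rw [pow_succ, one_div, inv_pow]; field_simp
  set J : ℕ → ℝ≥0∞ := fun k => (S ^ n)⁻¹ * ∫⁻ z in ball y (2 * s),
          ENNReal.ofReal |cv f (dps ψ j (a k)) z| with hJ
  set w := cv f (dps ψ j s) with hw
  have hwc : Continuous w := cv_cont hf (hb.dps_cont j s) (hb.dps_cs j hs)
  have hSi : ENNReal.ofReal ((s⁻¹) ^ n) = (S ^ n)⁻¹ := by
    rw [ENNReal.ofReal_pow (by positivity), ENNReal.ofReal_inv_of_pos hs, ENNReal.inv_pow]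
  have hD : ∀ k l, k ≤ l + 1 → ENNReal.ofReal |cv (cv f (dps ψ j (a l))) (Dk ψ s (a k)) y| ≤
      ENNReal.ofReal (K ^ 2) * (2⁻¹ ^ k * J l) := by
    intro k l _
    refine (cv_le _ _ (2 * s) _ (Dk_zero hb hs (ha0 k) (has k))
      (Dk_le hb hK0 hKd hKi hs (ha0 k)) y).trans ?_
    have h1 : a k / s ≤ (1/2) ^ k := by
      simp only [ha]
      rw [pow_succ, one_div, inv_pow, div_div, div_le_iff₀ (by positivity), inv_mul_eq_div,
        le_div_iff₀ (by positivity)]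
      nlinarith [show (0:ℝ) < 2 ^ k by positivity]
    have h2 : ENNReal.ofReal (K ^ 2 * (s⁻¹) ^ n * (a k / s)) ≤
        ENNReal.ofReal (K ^ 2) * (S ^ n)⁻¹ * 2⁻¹ ^ k := by
      rw [← hSi]
      have : (2⁻¹ : ℝ≥0∞) ^ k = ENNReal.ofReal ((1/2) ^ k) := by
        rw [ENNReal.ofReal_pow (by norm_num)]; simp
      rw [this, ← ENNReal.ofReal_mul (by positivity), ← ENNReal.ofReal_mul (by positivity)]
      gcongr
    calc _ ≤ ENNReal.ofReal (K ^ 2) * (S ^ n)⁻¹ * 2⁻¹ ^ k * _ := mul_le_mul_left h2 _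
      _ = _ := by rw [hJ]; ring
  have hA : ENNReal.ofReal |cv (cv f (dps ψ j (a 0))) (psc ψ s) y| ≤ ENNReal.ofReal K * J 0 := by
    refine (cv_le _ _ s _ (hb.psc_zero hs) (IsBump.psc_le hK hs) y).trans ?_
    rw [ENNReal.ofReal_mul (by positivity), hSi, mul_comm _ (ENNReal.ofReal K), mul_assoc]
    gcongr
    simp only [hJ]
    gcongr
    linarith
  set T := ∑' k : ℕ, 2⁻¹ ^ k * J k with hT
  have hP0 : ENNReal.ofReal |Pk ψ w (a 0) y| ≤
      (ENNReal.ofReal K + ENNReal.ofReal (K ^ 2)) * T := by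
    rw [Pk_eq hb hf j hs (ha0 0)]
    have h0 : J 0 ≤ T := by
      have := ENNReal.le_tsum (f := fun k => 2⁻¹ ^ k * J k) 0
      simpa using this
    calc _ ≤ ENNReal.ofReal |cv (cv f (dps ψ j (a 0))) (psc ψ s) y| +
          ENNReal.ofReal |cv (cv f (dps ψ j (a 0))) (Dk ψ s (a 0)) y| := by
          rw [← ENNReal.ofReal_add (by positivity) (by positivity)]
          exact ENNReal.ofReal_le_ofReal (abs_add_le _ _)
      _ ≤ ENNReal.ofReal K * J 0 + ENNReal.ofReal (K ^ 2) * (2⁻¹ ^ 0 * J 0) :=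
          add_le_add hA (hD 0 0 (by omega))
      _ = (ENNReal.ofReal K + ENNReal.ofReal (K ^ 2)) * J 0 := by ring
      _ ≤ _ := by gcongr
  have hstep : ∀ k, edist (Pk ψ w (a k) y) (Pk ψ w (a (k + 1)) y) ≤
      ENNReal.ofReal (K ^ 2) * (2 * (2⁻¹ ^ k * J k) + 4 * (2⁻¹ ^ (k + 1) * J (k + 1))) := by
    intro k
    have h21 : (2⁻¹ : ℝ≥0∞) ^ (k + 1) ≤ 2⁻¹ ^ k := by
      rw [pow_succ]; exact mul_le_of_le_one_right' (by simp)
    have h22 : (2⁻¹ : ℝ≥0∞) ^ k = 2 * 2⁻¹ ^ (k + 1) := by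
      rw [pow_succ, mul_left_comm, ENNReal.mul_inv_cancel (by simp) (by simp), mul_one]
    rw [edist_comm, edist_dist, Real.dist_eq, Pk_diff hb hf j hs (ha0 k) (ha0 (k + 1))]
    refine (ofReal_abs_four _ _ _ _).trans ?_
    calc _ ≤ (ENNReal.ofReal (K ^ 2) * (2⁻¹ ^ k * J (k + 1)) +
          ENNReal.ofReal (K ^ 2) * (2⁻¹ ^ (k + 1) * J (k + 1))) +
          (ENNReal.ofReal (K ^ 2) * (2⁻¹ ^ k * J k) +
          ENNReal.ofReal (K ^ 2) * (2⁻¹ ^ (k + 1) * J k)) :=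
          add_le_add (add_le_add (hD _ _ (by omega)) (hD _ _ (by omega)))
            (add_le_add (hD _ _ (by omega)) (hD _ _ (by omega)))
      _ ≤ (ENNReal.ofReal (K ^ 2) * (2⁻¹ ^ k * J (k + 1)) +
          ENNReal.ofReal (K ^ 2) * (2⁻¹ ^ k * J (k + 1))) +
          (ENNReal.ofReal (K ^ 2) * (2⁻¹ ^ k * J k) +
          ENNReal.ofReal (K ^ 2) * (2⁻¹ ^ k * J k)) := by gcongr
      _ = _ := by
          nth_rewrite 1 2 [h22]
          ring
  have hlim := Pk_lim hb hwc y a ha0 halim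
  have hfin := edist_le_tsum_of_edist_le_of_tendsto₀ _ hstep hlim
  have hsh : ∑' k : ℕ, (2⁻¹ ^ (k + 1) * J (k + 1)) ≤ T :=
    ENNReal.tsum_comp_le_tsum_of_injective (add_left_injective 1) (fun k => 2⁻¹ ^ k * J k)
  have hsum : edist (Pk ψ w (a 0) y) (w y) ≤ ENNReal.ofReal (K ^ 2) * (6 * T) := by
    refine hfin.trans ?_
    rw [ENNReal.tsum_mul_left, ENNReal.tsum_add, ENNReal.tsum_mul_left, ENNReal.tsum_mul_left]
    calc _ ≤ ENNReal.ofReal (K ^ 2) * (2 * T + 4 * T) := by gcongr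
      _ = _ := by ring
  have hfinal : ENNReal.ofReal |w y| ≤ ENNReal.ofReal |Pk ψ w (a 0) y| +
      edist (Pk ψ w (a 0) y) (w y) := by
    rw [edist_dist, ← ENNReal.ofReal_add (by positivity) (by positivity), Real.dist_eq]
    apply ENNReal.ofReal_le_ofReal
    have := abs_sub (Pk ψ w (a 0) y) (Pk ψ w (a 0) y - w y)
    simpa using this
  calc _ ≤ _ := hfinal
    _ ≤ (ENNReal.ofReal K + ENNReal.ofReal (K ^ 2)) * T + ENNReal.ofReal (K ^ 2) * (6 * T) :=
        add_le_add hP0 hsum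
    _ = _ := by ring

lemma bootstrap {n : ℕ} {ψ : EuclideanSpace ℝ (Fin n) → ℝ} (hb : IsBump ψ)
    (r : ℝ) (hr1 : (n : ℝ) / (n + 1) < r) (hr2 : r < 1) :
    ∃ C : ℝ≥0∞, C ≠ ⊤ ∧ ∀ f : EuclideanSpace ℝ (Fin n) → ℝ, LocallyIntegrable f → ∀ j x₀ t,
      0 < t → ∀ y ∈ closedBall x₀ (2 * t), ENNReal.ofReal |cv f (dps ψ j t) y| ≤
        (C * ((ENNReal.ofReal t ^ n)⁻¹ * ∫⁻ z in ball x₀ (7 * t), smoothMax n ψ f j z ^ r)) ^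
          (1 / r) := by
  have hr0 : 0 < r := lt_of_le_of_lt (by positivity) hr1
  have hnr : (n : ℝ) < r * (n + 1) := (div_lt_iff₀ (by positivity)).1 hr1
  have hr1' : 0 < 1 - r := by linarith
  obtain ⟨K, hK1, -, -, -, hKd⟩ := hb.bound
  obtain ⟨C₀, hC₀, H⟩ := star hb
  set v : ℝ≥0∞ := 2 ^ (n + 1) with hv
  have hv0 : v ≠ 0 := by simp [hv]
  have hvt : v ≠ ⊤ := by finiteness
  set b : ℝ≥0∞ := v ^ (1 - r) with hb_def
  have hbt : b ≠ ⊤ := by finiteness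
  have hb2 : b = 2 ^ ((n + 1) * (1 - r)) := by
    rw [hb_def, hv, ← ENNReal.rpow_natCast, ← ENNReal.rpow_mul]; push_cast; rfl
  set ρ : ℝ≥0∞ := 2⁻¹ * b with hρ
  have hρ1 : ρ < 1 := by
    rw [hρ, hb2, ← ENNReal.rpow_neg_one, ← ENNReal.rpow_add _ _ (by norm_num) (by norm_num)]
    exact ENNReal.rpow_lt_one_of_one_lt_of_neg (by norm_num) (by nlinarith)
  refine ⟨C₀ * b * (1 - ρ)⁻¹, ?_, ?_⟩
  · have : (1 - ρ)⁻¹ ≠ ⊤ := ENNReal.inv_ne_top.2 (tsub_pos_of_lt hρ1).ne'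
    finiteness
  intro f hf j x₀ t ht
  set T := ENNReal.ofReal t with hT
  have hT0 : T ≠ 0 := by simpa [hT] using ht
  have hTt : T ≠ ⊤ := by simp [hT]
  have hTn0 : T ^ n ≠ 0 := pow_ne_zero _ hT0
  have hTnt : T ^ n ≠ ⊤ := by finiteness
  set M := smoothMax n ψ f j with hM
  set I := (T ^ n)⁻¹ * ∫⁻ z in ball x₀ (7 * t), M z ^ r with hI
  set G : ℕ → EuclideanSpace ℝ (Fin n) → ℝ≥0∞ := fun k y =>
    ENNReal.ofReal |cv f (dps ψ j (t / 2 ^ k)) y| with hG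
  have htk : ∀ k : ℕ, 0 < t / 2 ^ k := fun k => by positivity
  have hGM : ∀ k y, G k y ≤ M y := fun k y => le_smoothMax ψ f j y (htk k)
  set R : ℕ → ℝ := fun k => 6 * t - 4 * (t / 2 ^ k) with hR
  have htT : ∀ k : ℕ, ENNReal.ofReal (t / 2 ^ k) = T * 2⁻¹ ^ k := by
    intro k
    rw [hT, ENNReal.ofReal_div_of_pos (by positivity), ENNReal.ofReal_pow (by norm_num),
        div_eq_mul_inv, ENNReal.inv_pow]
    simp
  -- finiteness of the supremum
  set A : ℝ≥0∞ := ⨆ k : ℕ, ⨆ y : closedBall x₀ (R k), (v⁻¹) ^ k * G k y.1 with hA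
  have hdec : ∀ k : ℕ, t / 2 ^ k ≤ t := fun k => div_le_self ht.le (one_le_pow₀ (by norm_num))
  have hAt : A ≠ ⊤ := by
    have hfi : ∫⁻ z in ball x₀ (7 * t), ENNReal.ofReal |f z| ≠ ⊤ := by
      have h1 : IntegrableOn f (closedBall x₀ (7 * t)) :=
        hf.integrableOn_isCompact (isCompact_closedBall _ _)
      have h2 := (h1.mono_set ball_subset_closedBall).2
      simp_rw [← Real.norm_eq_abs, ofReal_norm]
      exact h2.ne
    refine ne_top_of_le_ne_top (b := (T ^ (n + 1))⁻¹ * ENNReal.ofReal K *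
      ∫⁻ z in ball x₀ (7 * t), ENNReal.ofReal |f z|) ?_ ?_
    · have : (T ^ (n + 1))⁻¹ ≠ ⊤ := ENNReal.inv_ne_top.2 (pow_ne_zero _ hT0)
      finiteness
    refine iSup_le fun k => iSup_le fun ⟨y, hy⟩ => ?_
    have h1 := cv_le f (dps ψ j (t / 2 ^ k)) (t / 2 ^ k) _
      (fun z hz => hb.dps_zero j (htk k) z hz) (IsBump.dps_le j (hKd j) (htk k)) y
    have h2 : ENNReal.ofReal (((t / 2 ^ k)⁻¹) ^ (n + 1) * K) =
        v ^ k * ((T ^ (n + 1))⁻¹ * ENNReal.ofReal K) := by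
      rw [ENNReal.ofReal_mul (by positivity), ENNReal.ofReal_pow (by positivity),
        ENNReal.ofReal_inv_of_pos (htk k), htT, ENNReal.mul_inv (Or.inl hT0) (Or.inl hTt),
        ENNReal.inv_pow, inv_inv, mul_pow, hv, ← pow_mul, ← pow_mul, ENNReal.inv_pow,
        mul_comm k]
      ring
    have h3 : ∫⁻ z in ball y (t / 2 ^ k), ENNReal.ofReal |f z| ≤
        ∫⁻ z in ball x₀ (7 * t), ENNReal.ofReal |f z| := by
      apply lintegral_mono_set
      apply ball_subset_ball'
      have := mem_closedBall.1 hy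
      simp only [hR] at this
      linarith [htk k]
    calc (v⁻¹) ^ k * G k y ≤ (v⁻¹) ^ k * (v ^ k * ((T ^ (n + 1))⁻¹ * ENNReal.ofReal K) *
          ∫⁻ z in ball x₀ (7 * t), ENNReal.ofReal |f z|) := by
          rw [← h2]
          gcongr
          exact h1.trans (mul_le_mul_right h3 _)
      _ = (v⁻¹ * v) ^ k * ((T ^ (n + 1))⁻¹ * ENNReal.ofReal K *
          ∫⁻ z in ball x₀ (7 * t), ENNReal.ofReal |f z|) := by rw [mul_pow]; ring
      _ = _ := by rw [ENNReal.inv_mul_cancel hv0 hvt, one_pow, one_mul]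
  have hGA : ∀ k, ∀ y ∈ closedBall x₀ (R k), G k y ≤ v ^ k * A := by
    intro k y hy
    have h1 : (v⁻¹) ^ k * G k y ≤ A :=
      le_iSup_of_le k (le_iSup_of_le (⟨y, hy⟩ : closedBall x₀ (R k)) le_rfl)
    calc G k y = (v * v⁻¹) ^ k * G k y := by
          rw [ENNReal.mul_inv_cancel hv0 hvt, one_pow, one_mul]
      _ = v ^ k * ((v⁻¹) ^ k * G k y) := by rw [mul_pow, mul_assoc]
      _ ≤ _ := by gcongr
  have hGle : ∀ l, ∀ z ∈ closedBall x₀ (R l), G l z ≤ M z ^ r * (b ^ l * A ^ (1 - r)) := by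
    intro l z hz
    calc G l z = G l z ^ r * G l z ^ (1 - r) := by
          rw [← ENNReal.rpow_add_of_nonneg _ _ hr0.le hr1'.le]; simp
      _ ≤ M z ^ r * (v ^ l * A) ^ (1 - r) := by
          gcongr
          · exact hGM l z
          · exact hGA l z hz
      _ = _ := by
          rw [ENNReal.mul_rpow_of_nonneg _ _ hr1'.le, hb_def, ← ENNReal.rpow_natCast,
            ← ENNReal.rpow_natCast, ← ENNReal.rpow_mul, ← ENNReal.rpow_mul, mul_comm (l:ℝ)]
  have hrec : A ≤ C₀ * b * (1 - ρ)⁻¹ * I * A ^ (1 - r) := by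
    refine iSup_le fun k => iSup_le fun ⟨y, hy⟩ => ?_
    have hst := H f hf j (t / 2 ^ k) (htk k) y
    have hterm : ∀ m : ℕ, ∫⁻ z in ball y (2 * (t / 2 ^ k)),
        ENNReal.ofReal |cv f (dps ψ j (t / 2 ^ k / 2 ^ (m + 1))) z| ≤
        (T ^ n * I) * (b ^ (k + (m + 1)) * A ^ (1 - r)) := by
      intro m
      have hTI : T ^ n * I = ∫⁻ z in ball x₀ (7 * t), M z ^ r := by
        rw [hI, ← mul_assoc, ENNReal.mul_inv_cancel hTn0 hTnt, one_mul]
      have hsub : ball y (2 * (t / 2 ^ k)) ⊆ closedBall x₀ (R (k + (m + 1))) := by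
        refine ball_subset_closedBall.trans (closedBall_subset_closedBall' ?_)
        have h1 := mem_closedBall.1 hy
        simp only [hR] at h1 ⊢
        have h2 : t / 2 ^ (k + (m + 1)) ≤ (t / 2 ^ k) / 2 := by
          rw [pow_add, ← div_div, pow_succ]
          have : (1:ℝ) ≤ 2 ^ m := one_le_pow₀ (by norm_num)
          gcongr
          linarith
        linarith
      have hsub2 : ball y (2 * (t / 2 ^ k)) ⊆ ball x₀ (7 * t) := by
        refine hsub.trans (closedBall_subset_ball ?_)
        simp only [hR]
        linarith [htk (k + (m + 1))]
      rw [hTI, ← lintegral_mul_const' _ _ (by finiteness), div_div, ← pow_add]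
      refine le_trans ?_ (lintegral_mono_set hsub2)
      apply setLIntegral_mono' measurableSet_ball
      intro z hz
      exact hGle _ z (hsub hz)
    have hcoef : ∀ m : ℕ, (v⁻¹) ^ k * (2⁻¹ ^ m * ((ENNReal.ofReal (t / 2 ^ k) ^ n)⁻¹ *
        ((T ^ n * I) * (b ^ (k + (m + 1)) * A ^ (1 - r))))) = ρ ^ k * (b * ρ ^ m) * (I * A ^ (1 - r)) := by
      intro m
      have h1 : (ENNReal.ofReal (t / 2 ^ k) ^ n)⁻¹ = (2 ^ n) ^ k * (T ^ n)⁻¹ := by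
        have h0 : ((2⁻¹ : ℝ≥0∞) ^ (k * n))⁻¹ = 2 ^ (n * k) := by
          rw [ENNReal.inv_pow, inv_inv, mul_comm]
        rw [htT, mul_pow, ENNReal.mul_inv (Or.inl hTn0) (Or.inl hTnt), ← pow_mul, h0,
          ← pow_mul, mul_comm]
      have h2 : v⁻¹ * 2 ^ n = 2⁻¹ := by
        rw [hv, pow_succ, ENNReal.mul_inv (by simp) (by simp), mul_comm, ← mul_assoc,
          ENNReal.mul_inv_cancel (by simp) (by finiteness), one_mul]
      rw [h1, hρ]
      calc _ = (v⁻¹ * 2 ^ n) ^ k * 2⁻¹ ^ m * ((T ^ n)⁻¹ * T ^ n) * I * b ^ (k + (m + 1)) *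
            A ^ (1 - r) := by rw [mul_pow (v⁻¹)]; ring
        _ = _ := by
            rw [ENNReal.inv_mul_cancel hTn0 hTnt, h2, mul_pow, mul_pow]; ring
    calc (v⁻¹) ^ k * G k y ≤ (v⁻¹) ^ k * (C₀ * ∑' m : ℕ, 2⁻¹ ^ m *
          ((ENNReal.ofReal (t / 2 ^ k) ^ n)⁻¹ *
          ((T ^ n * I) * (b ^ (k + (m + 1)) * A ^ (1 - r))))) := by
          gcongr
          refine hst.trans ?_
          gcongr with m
          exact hterm m
      _ = C₀ * ∑' m : ℕ, (v⁻¹) ^ k * (2⁻¹ ^ m * ((ENNReal.ofReal (t / 2 ^ k) ^ n)⁻¹ *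
        ((T ^ n * I) * (b ^ (k + (m + 1)) * A ^ (1 - r))))) := by
          rw [mul_left_comm, ENNReal.tsum_mul_left]
      _ = C₀ * (ρ ^ k * (b * (1 - ρ)⁻¹) * (I * A ^ (1 - r))) := by
          simp_rw [hcoef]
          rw [ENNReal.tsum_mul_right, ENNReal.tsum_mul_left, ENNReal.tsum_mul_left,
            ENNReal.tsum_geometric]
      _ ≤ C₀ * (1 * (b * (1 - ρ)⁻¹) * (I * A ^ (1 - r))) := by
          gcongr
          exact pow_le_one' hρ1.le k
      _ = _ := by ring
  have hAr : A ^ r ≤ C₀ * b * (1 - ρ)⁻¹ * I := by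
    rcases eq_or_ne A 0 with h0 | h0
    · rw [h0, ENNReal.zero_rpow_of_pos hr0]; exact zero_le
    have h1 : A ^ (1 - r) ≠ 0 := by
      intro h; exact h0 ((ENNReal.rpow_eq_zero_iff_of_pos hr1').1 h)
    have h2 : A ^ (1 - r) ≠ ⊤ := by finiteness
    have h3 : A = A ^ r * A ^ (1 - r) := by
      rw [← ENNReal.rpow_add_of_nonneg _ _ hr0.le hr1'.le]; simp
    exact (ENNReal.mul_le_mul_iff_left h1 h2).1 (h3.symm.le.trans hrec)
  intro y hy
  have h1 := hGA 0 y (by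
    simp only [hR]
    simpa [show 6 * t - 4 * t = 2 * t by ring] using hy)
  simp only [hG, pow_zero, div_one, one_mul] at h1
  refine h1.trans ?_
  rw [one_div, ENNReal.le_rpow_inv_iff hr0]
  exact hAr

lemma grad_bound {n : ℕ} {ψ : EuclideanSpace ℝ (Fin n) → ℝ} (hb : IsBump ψ)
    (r : ℝ) (hr1 : (n : ℝ) / (n + 1) < r) (hr2 : r < 1) :
    ∃ C : ℝ≥0∞, C ≠ ⊤ ∧ ∀ f : EuclideanSpace ℝ (Fin n) → ℝ, LocallyIntegrable f → ∀ j x t,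
      0 < t → ∀ y ∈ closedBall x (2 * t), ENNReal.ofReal |cv f (dps ψ j t) y| ≤
        C * (UM (fun z => smoothMax n ψ f j z ^ r) x) ^ (1 / r) := by
  have hr0 : 0 < r := lt_of_le_of_lt (by positivity) hr1
  obtain ⟨C, hC, H⟩ := bootstrap hb r hr1 hr2
  refine ⟨(C * 7 ^ n) ^ (1 / r), by finiteness, ?_⟩
  intro f hf j x t ht y hy
  refine (H f hf j x t ht y hy).trans ?_
  rw [← ENNReal.mul_rpow_of_nonneg _ _ (by positivity), mul_assoc]
  set h := fun z => smoothMax n ψ f j z ^ r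
  have hU := le_UM h x x (7 * t) (by positivity) (mem_ball_self (by positivity))
  have hT0 : ENNReal.ofReal t ≠ 0 := by simpa using ht
  have hTn0 : ENNReal.ofReal t ^ n ≠ 0 := pow_ne_zero _ hT0
  have hTnt : ENNReal.ofReal t ^ n ≠ ⊤ := by finiteness
  have hV : (7 : ℝ≥0∞) ^ n * ((ENNReal.ofReal t ^ n)⁻¹ * ((7 ^ n)⁻¹ * ∫⁻ y in ball x (7 * t), h y))
      ≤ 7 ^ n * UM h x := by
    refine le_trans (le_of_eq ?_) (mul_le_mul_right hU (7 ^ n))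
    rw [ENNReal.ofReal_mul (by norm_num), mul_pow, ENNReal.mul_inv (Or.inr hTnt) (Or.inr hTn0)]
    simp only [ENNReal.ofReal_ofNat]
    ring
  rw [← mul_assoc, ← mul_assoc]
  have hW : (ENNReal.ofReal t ^ n)⁻¹ * ∫⁻ y in ball x (7 * t), h y ≤ 7 ^ n * UM h x := by
    refine le_trans (le_of_eq ?_) hV
    rw [mul_left_comm, ← mul_assoc (7 ^ n : ℝ≥0∞) ((7 ^ n)⁻¹),
      ENNReal.mul_inv_cancel (by simp) (by finiteness), one_mul]
  refine ENNReal.rpow_le_rpow ?_ (by positivity)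
  rw [mul_assoc, mul_assoc]
  exact mul_le_mul_right hW C

lemma opNorm_le_sum {n : ℕ} (D : EuclideanSpace ℝ (Fin n) →L[ℝ] ℝ) :
    ‖D‖ ≤ ∑ j, |D (EuclideanSpace.single j 1)| := by
  refine D.opNorm_le_bound (Finset.sum_nonneg fun _ _ => abs_nonneg _) fun v => ?_
  have hv : v = ∑ j, v j • EuclideanSpace.single j (1:ℝ) := by
    have := (EuclideanSpace.basisFun (Fin n) ℝ).sum_repr v
    simpa using this.symm
  conv_lhs => rw [hv]
  rw [map_sum, Finset.sum_mul]
  refine (norm_sum_le _ _).trans (Finset.sum_le_sum fun j _ => ?_)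
  rw [map_smul, norm_smul, mul_comm, Real.norm_eq_abs (D _)]
  gcongr
  exact PiLp.norm_apply_le v j

/-- the candidate gradient, up to constants -/
def Lam {n : ℕ} (ψ f : EuclideanSpace ℝ (Fin n) → ℝ) (r : ℝ) (x : EuclideanSpace ℝ (Fin n)) :
    ℝ≥0∞ := ∑ j, (UM (fun z => smoothMax n ψ f j z ^ r) x) ^ (1 / r)

lemma Lam_meas {n : ℕ} (ψ f : EuclideanSpace ℝ (Fin n) → ℝ) (r : ℝ) : Measurable (Lam ψ f r) := by
  unfold Lam
  exact Finset.measurable_fun_sum _ fun j _ => (UM_meas _).pow_const _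

lemma lipF {n : ℕ} {ψ : EuclideanSpace ℝ (Fin n) → ℝ} (hb : IsBump ψ)
    (r : ℝ) (hr1 : (n : ℝ) / (n + 1) < r) (hr2 : r < 1) :
    ∃ C : ℝ≥0∞, C ≠ ⊤ ∧ ∀ f : EuclideanSpace ℝ (Fin n) → ℝ, LocallyIntegrable f → ∀ x,
      Lam ψ f r x ≠ ⊤ → ∀ s, 0 < s → ∀ u ∈ closedBall x (2 * s), ∀ w ∈ closedBall x (2 * s),
        |cv f (psc ψ s) u - cv f (psc ψ s) w| ≤ (C * Lam ψ f r x).toReal * ‖u - w‖ := by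
  obtain ⟨C, hC, H⟩ := grad_bound hb r hr1 hr2
  refine ⟨C, hC, ?_⟩
  intro f hf x hx s hs u hu w hw
  choose D hD hD2 using cv_hasFDerivAt hf (hb.psc_contDiff s) (hb.psc_cs hs)
  have := Convex.norm_image_sub_le_of_norm_hasFDerivWithin_le (𝕜 := ℝ) (f := cv f (psc ψ s))
    (f' := D) (s := closedBall x (2 * s)) (x := w) (y := u) (C := (C * Lam ψ f r x).toReal)
    (fun y _ => (hD y).hasFDerivWithinAt) ?_ (convex_closedBall _ _) hw hu
  · exact this
  intro y hy
  refine (opNorm_le_sum _).trans ?_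
  rw [← ENNReal.ofReal_le_iff_le_toReal (by finiteness),
    ENNReal.ofReal_sum_of_nonneg fun _ _ => abs_nonneg _, Lam, Finset.mul_sum]
  refine Finset.sum_le_sum fun j _ => ?_
  rw [hD2, hb.dps_eq]
  exact H f hf j x s hs y hy

lemma lebesgue {n : ℕ} {ψ : EuclideanSpace ℝ (Fin n) → ℝ} (hb : IsBump ψ)
    {f : EuclideanSpace ℝ (Fin n) → ℝ} (hf : LocallyIntegrable f) :
    ∀ᵐ x, ∀ s : ℝ, 0 < s → Filter.Tendsto (fun k : ℕ => cv f (psc ψ (s / 2 ^ k)) x)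
      Filter.atTop (nhds (f x)) := by
  obtain ⟨K, hK1, hK, -, -, -⟩ := hb.bound
  filter_upwards [IsUnifLocDoublingMeasure.ae_tendsto_average_norm_sub volume hf 1] with x hx s hs
  have hsk : ∀ k : ℕ, 0 < s / 2 ^ k := fun k => by positivity
  have hδ : Filter.Tendsto (fun k : ℕ => s / 2 ^ k) Filter.atTop (nhdsWithin 0 (Ioi 0)) := by
    rw [tendsto_nhdsWithin_iff]
    refine ⟨?_, Filter.Eventually.of_forall hsk⟩
    have := (_root_.tendsto_pow_atTop_nhds_zero_of_lt_one (r := (1/2:ℝ)) (by norm_num)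
      (by norm_num)).const_mul s
    rw [mul_zero] at this
    refine this.congr fun k => ?_
    rw [one_div, inv_pow]; field_simp
  have h1 := hx (fun _ : ℕ => x) (fun k : ℕ => s / 2 ^ k) hδ
    (Filter.Eventually.of_forall fun k => by
      rw [one_mul]; exact mem_closedBall_self (hsk k).le)
  have h2 := tendsto_integral_smul_of_tendsto_average_norm_sub (μ := volume)
    (g := fun (k : ℕ) y => psc ψ (s / 2 ^ k) (x - y))
    (K * volume.real (ball (0 : EuclideanSpace ℝ (Fin n)) 1)) h1
    (Filter.Eventually.of_forall fun k => hf.integrableOn_isCompact (isCompact_closedBall _ _))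
    (by
      have : ∀ k : ℕ, ∫ y, psc ψ (s / 2 ^ k) (x - y) = 1 := fun k => by
        rw [integral_sub_left_eq_self (psc ψ (s / 2 ^ k)), hb.psc_int (hsk k)]
      simp_rw [this]
      exact tendsto_const_nhds)
    (Filter.Eventually.of_forall fun k y hy => by
      by_contra hc
      apply hy
      apply hb.psc_zero (hsk k)
      intro h'
      apply hc
      rw [mem_ball_zero_iff] at h'
      rw [mem_closedBall, dist_eq_norm, norm_sub_rev]
      exact h'.le)
    (Filter.Eventually.of_forall fun k y => by
      refine (IsBump.psc_le hK (hsk k) _).trans (le_of_eq ?_)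
      rw [Measure.addHaar_real_closedBall _ _ (hsk k).le, finrank_euclideanSpace_fin]
      have : volume.real (ball (0 : EuclideanSpace ℝ (Fin n)) 1) ≠ 0 := by
        rw [measureReal_def]
        exact (ENNReal.toReal_pos (kap_pos n).ne' (kap_ne_top n)).ne'
      rw [mul_div_mul_right _ _ this, inv_pow, inv_mul_eq_div])
  refine h2.congr fun k => ?_
  rw [cv_apply]
  congr 1; ext y; rw [smul_eq_mul, mul_comm]

lemma step_bound {n : ℕ} {ψ f : EuclideanSpace ℝ (Fin n) → ℝ} (hb : IsBump ψ)
    (hf : LocallyIntegrable f) {K L : ℝ} (hL : 0 ≤ L) (hK : (∫ z, |ψ z|) ≤ K) (x)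
    (H : ∀ s, 0 < s → ∀ u ∈ closedBall x (2 * s), ∀ w ∈ closedBall x (2 * s),
        |cv f (psc ψ s) u - cv f (psc ψ s) w| ≤ L * ‖u - w‖) (s : ℝ) (hs : 0 < s) :
    |cv f (psc ψ s) x - cv f (psc ψ (s / 2)) x| ≤ 2 * K * L * s := by
  have hs2 : 0 < s / 2 := by positivity
  have hl : ∀ a, 0 < a → LocallyIntegrable (cv f (psc ψ a)) := fun a ha =>
    (cv_cont hf (hb.psc_cont a) (hb.psc_cs ha)).locallyIntegrable
  have h1 := cv_avg (hl s hs) (hb.psc_cont (s / 2)) (hb.psc_cs hs2) (s / 2) (hb.psc_zero hs2)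
    (hb.psc_int hs2) x (cv f (psc ψ s) x) (L * s) (fun z hz => by
      rw [mem_ball, dist_eq_norm] at hz
      refine (H s hs z ?_ x (mem_closedBall_self (by positivity))).trans ?_
      · rw [mem_closedBall, dist_eq_norm]; linarith
      · gcongr; linarith)
  have h2 := cv_avg (hl (s / 2) hs2) (hb.psc_cont s) (hb.psc_cs hs) s (hb.psc_zero hs)
    (hb.psc_int hs) x (cv f (psc ψ (s / 2)) x) (L * s) (fun z hz => by
      rw [mem_ball, dist_eq_norm] at hz
      refine (H (s / 2) hs2 z ?_ x (mem_closedBall_self (by positivity))).trans ?_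
      · rw [mem_closedBall, dist_eq_norm]; linarith
      · gcongr)
  rw [IsBump.psc_abs_int hs2] at h1
  rw [IsBump.psc_abs_int hs] at h2
  rw [cv_psc_comm hb hf hs hs2] at h1
  have h3 : (∫ z, |ψ z|) * (L * s) ≤ K * (L * s) := by gcongr
  rw [abs_le] at *
  constructor <;> linarith [h1.1, h1.2, h2.1, h2.2]

lemma tele_bound {n : ℕ} {ψ f : EuclideanSpace ℝ (Fin n) → ℝ} (hb : IsBump ψ)
    (hf : LocallyIntegrable f) {K L : ℝ} (hL : 0 ≤ L) (hK : (∫ z, |ψ z|) ≤ K) (x)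
    (H : ∀ s, 0 < s → ∀ u ∈ closedBall x (2 * s), ∀ w ∈ closedBall x (2 * s),
        |cv f (psc ψ s) u - cv f (psc ψ s) w| ≤ L * ‖u - w‖)
    (hx : ∀ s : ℝ, 0 < s → Filter.Tendsto (fun k : ℕ => cv f (psc ψ (s / 2 ^ k)) x)
      Filter.atTop (nhds (f x))) (s : ℝ) (hs : 0 < s) :
    |cv f (psc ψ s) x - f x| ≤ 4 * K * L * s := by
  have := dist_le_of_le_geometric_two_of_tendsto₀ (C := 4 * K * L * s)
    (f := fun k : ℕ => cv f (psc ψ (s / 2 ^ k)) x) (a := f x) (fun k => by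
      rw [Real.dist_eq, pow_succ, ← div_div]
      refine (step_bound hb hf hL hK x H (s / 2 ^ k) (by positivity)).trans (le_of_eq ?_)
      ring) (hx s hs)
  simpa [Real.dist_eq] using this

lemma haj_pair {n : ℕ} {ψ f : EuclideanSpace ℝ (Fin n) → ℝ} (hb : IsBump ψ)
    (hf : LocallyIntegrable f) {K L M : ℝ} (hL : 0 ≤ L) (hM : 0 ≤ M) (hK1 : 1 ≤ K)
    (hK : (∫ z, |ψ z|) ≤ K) (x y)
    (H : ∀ s, 0 < s → ∀ u ∈ closedBall x (2 * s), ∀ w ∈ closedBall x (2 * s),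
        |cv f (psc ψ s) u - cv f (psc ψ s) w| ≤ L * ‖u - w‖)
    (hx : ∀ s : ℝ, 0 < s → Filter.Tendsto (fun k : ℕ => cv f (psc ψ (s / 2 ^ k)) x)
      Filter.atTop (nhds (f x)))
    (H' : ∀ s, 0 < s → ∀ u ∈ closedBall y (2 * s), ∀ w ∈ closedBall y (2 * s),
        |cv f (psc ψ s) u - cv f (psc ψ s) w| ≤ M * ‖u - w‖)
    (hy : ∀ s : ℝ, 0 < s → Filter.Tendsto (fun k : ℕ => cv f (psc ψ (s / 2 ^ k)) y)
      Filter.atTop (nhds (f y))) :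
    |f x - f y| ≤ ‖x - y‖ * (5 * K * L + 5 * K * M) := by
  by_cases hxy : x = y
  · subst hxy; simp
  have hρ : 0 < ‖x - y‖ := norm_pos_iff.2 (sub_ne_zero.2 hxy)
  have h1 := tele_bound hb hf hL hK x H hx _ hρ
  have h2 := tele_bound hb hf hM hK y H' hy _ hρ
  have h3 := H ‖x - y‖ hρ x (mem_closedBall_self (by positivity)) y (by
    rw [mem_closedBall, dist_comm, dist_eq_norm]; linarith)
  have h4 : 0 ≤ (K - 1) * (L * ‖x - y‖) := mul_nonneg (by linarith) (by positivity)
  have h5 : 0 ≤ K * (M * ‖x - y‖) := mul_nonneg (by linarith) (by positivity)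
  rw [abs_le] at *
  constructor <;> nlinarith [h1.1, h1.2, h2.1, h2.2, h3.1, h3.2]

lemma sum_rpow_le {ι : Type*} (s : Finset ι) (w : ι → ℝ≥0∞) (p : ℝ) (hp0 : 0 < p) (hp : p ≤ 1) :
    (∑ j ∈ s, w j) ^ p ≤ ∑ j ∈ s, w j ^ p := by
  classical
  induction s using Finset.induction_on with
  | empty => simp [hp0]
  | insert a s ha ih =>
    rw [Finset.sum_insert ha, Finset.sum_insert ha]
    exact (ENNReal.rpow_add_le_add_rpow _ _ hp0.le hp).trans (by gcongr)

lemma Lam_Lp {n : ℕ} (hn : 1 ≤ n) {ψ : EuclideanSpace ℝ (Fin n) → ℝ} (hb : IsBump ψ)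
    (r p : ℝ) (hr : 0 < r) (hrp : r < p) (hp : p ≤ 1) :
    ∃ C : ℝ≥0∞, C ≠ ⊤ ∧ ∀ f : EuclideanSpace ℝ (Fin n) → ℝ, LocallyIntegrable f →
      (∫⁻ x, Lam ψ f r x ^ p) ^ (1 / p) ≤
        C * ∑ j, (∫⁻ x, smoothMax n ψ f j x ^ p) ^ (1 / p) := by
  have hp0 : 0 < p := hr.trans hrp
  obtain ⟨C, hC, H⟩ := UM_Lp hn r p hr hrp
  refine ⟨(n : ℝ≥0∞) ^ (1 / p) * C, by finiteness, fun f hf => ?_⟩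
  set W : Fin n → EuclideanSpace ℝ (Fin n) → ℝ≥0∞ := fun j x =>
    (UM (fun z => smoothMax n ψ f j z ^ r) x) ^ (1 / r) with hW
  have hWm : ∀ j, Measurable (W j) := fun j => (UM_meas _).pow_const _
  set B : ℝ≥0∞ := ∑ j, (∫⁻ x, W j x ^ p) ^ (1 / p) with hB
  have hj : ∀ j, ∫⁻ x, W j x ^ p ≤ B ^ p := fun j => by
    have : (∫⁻ x, W j x ^ p) ^ (1 / p) ≤ B :=
      Finset.single_le_sum (f := fun j => (∫⁻ x, W j x ^ p) ^ (1 / p))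
        (fun _ _ => zero_le) (Finset.mem_univ j)
    have h2 := ENNReal.rpow_le_rpow this hp0.le
    rwa [← ENNReal.rpow_mul, one_div, inv_mul_cancel₀ hp0.ne', ENNReal.rpow_one] at h2
  have h1 : ∫⁻ x, Lam ψ f r x ^ p ≤ n * B ^ p := by
    calc ∫⁻ x, Lam ψ f r x ^ p ≤ ∫⁻ x, ∑ j, W j x ^ p :=
          lintegral_mono fun x => sum_rpow_le _ _ p hp0 hp
      _ = ∑ j, ∫⁻ x, W j x ^ p := lintegral_finsetSum _ fun j _ => (hWm j).pow_const _
      _ ≤ ∑ _j : Fin n, B ^ p := Finset.sum_le_sum fun j _ => hj j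
      _ = n * B ^ p := by simp
  calc (∫⁻ x, Lam ψ f r x ^ p) ^ (1 / p) ≤ (n * B ^ p) ^ (1 / p) :=
        ENNReal.rpow_le_rpow h1 (by positivity)
    _ = (n : ℝ≥0∞) ^ (1 / p) * B := by
        rw [ENNReal.mul_rpow_of_nonneg _ _ (by positivity), ← ENNReal.rpow_mul, one_div,
          mul_inv_cancel₀ hp0.ne', ENNReal.rpow_one]
    _ ≤ _ := by
        have hBle : B ≤ C * ∑ j, (∫⁻ x, smoothMax n ψ f j x ^ p) ^ (1 / p) := by
          rw [Finset.mul_sum]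
          exact Finset.sum_le_sum fun j _ => H _ (smoothMax_meas hb hf j)
        rw [mul_assoc]
        exact mul_le_mul_right hBle _

lemma dirB {n : ℕ} (hn : 1 ≤ n) {ψ : EuclideanSpace ℝ (Fin n) → ℝ} (hb : IsBump ψ)
    (p : ℝ) (hp1 : (n : ℝ) / (n + 1) < p) (hp2 : p ≤ 1) :
    ∃ C : ℝ≥0∞, C ≠ ⊤ ∧ ∀ f : EuclideanSpace ℝ (Fin n) → ℝ, LocallyIntegrable f →
      (∑ j, (∫⁻ x, smoothMax n ψ f j x ^ p) ^ (1 / p)) ≠ ⊤ →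
      ∃ g, IsHajlaszGradientOn n f g univ ∧
        lpNorm n p g volume ≤ C * ∑ j, (∫⁻ x, smoothMax n ψ f j x ^ p) ^ (1 / p) := by
  obtain ⟨r, hr1, hr2⟩ := exists_between hp1
  have hr0 : 0 < r := lt_of_le_of_lt (by positivity) hr1
  have hp0 : 0 < p := hr0.trans hr2
  obtain ⟨K, hK1, -, -, hK, -⟩ := hb.bound
  obtain ⟨C₁, hC₁, H₁⟩ := lipF hb r hr1 (hr2.trans_le hp2)
  obtain ⟨C₂, hC₂, H₂⟩ := Lam_Lp hn hb r p hr0 hr2 hp2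
  refine ⟨ENNReal.ofReal (5 * K) * C₁ * C₂, by finiteness, fun f hf hS => ?_⟩
  have hN := H₂ f hf
  have hfin : ∫⁻ x, Lam ψ f r x ^ p ≠ ⊤ := by
    intro h
    rw [h, ENNReal.top_rpow_of_pos (by positivity), top_le_iff] at hN
    exact ENNReal.mul_ne_top hC₂ hS hN
  have hae : ∀ᵐ x, Lam ψ f r x ≠ ⊤ := by
    filter_upwards [ae_lt_top ((Lam_meas ψ f r).pow_const p) hfin] with x hx h
    rw [h, ENNReal.top_rpow_of_pos hp0] at hx
    exact lt_irrefl _ hx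
  refine ⟨fun x => 5 * K * (C₁ * Lam ψ f r x).toReal, ⟨?_, fun x => by positivity, ?_⟩, ?_⟩
  · exact ((Lam_meas ψ f r).const_mul C₁).ennreal_toReal.const_mul _
  · refine ⟨_, ae_iff.1 (hae.and (lebesgue hb hf)), ?_⟩
    intro x hx y hy
    have hx' := not_not.1 hx.2
    have hy' := not_not.1 hy.2
    exact haj_pair hb hf ENNReal.toReal_nonneg ENNReal.toReal_nonneg hK1 hK x y
      (H₁ f hf x hx'.1) hx'.2 (H₁ f hf y hy'.1) hy'.2
  · calc lpNorm n p (fun x => 5 * K * (C₁ * Lam ψ f r x).toReal) volume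
        ≤ (∫⁻ x, (ENNReal.ofReal (5 * K) * C₁) ^ p * Lam ψ f r x ^ p) ^ (1 / p) := by
          unfold _root_.lpNorm
          refine ENNReal.rpow_le_rpow (lintegral_mono fun x => ?_) (by positivity)
          dsimp only
          rw [← ENNReal.mul_rpow_of_nonneg _ _ hp0.le, abs_of_nonneg (by positivity),
            ENNReal.ofReal_mul (by positivity), mul_assoc]
          refine ENNReal.rpow_le_rpow ?_ hp0.le
          exact mul_le_mul_right ENNReal.ofReal_toReal_le _
      _ = ENNReal.ofReal (5 * K) * C₁ * (∫⁻ x, Lam ψ f r x ^ p) ^ (1 / p) := by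
          rw [lintegral_const_mul _ ((Lam_meas ψ f r).pow_const p),
            ENNReal.mul_rpow_of_nonneg _ _ (by positivity), ← ENNReal.rpow_mul, one_div,
            mul_inv_cancel₀ hp0.ne', ENNReal.rpow_one]
      _ ≤ _ := by
          rw [mul_assoc _ C₂]
          exact mul_le_mul_right hN _

/-- **Theorem 1.1.** For `n ≥ 1` and `n/(n+1) < p ≤ 1`, a locally integrable `f` has a
Hajlasz gradient in `L^p(ℝⁿ)` iff each smooth maximal function `M_ψ(D_j f)` is in
`L^p(ℝⁿ)`, with equivalence of (quasi)norms. -/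
theorem hardy_sobolev_hajlasz_characterization
    (n : ℕ) (hn : 1 ≤ n) (p : ℝ) (hp1 : (n : ℝ) / (n + 1) < p) (hp2 : p ≤ 1)
    (ψ : EuclideanSpace ℝ (Fin n) → ℝ) (hψ : ContDiff ℝ (⊤ : ℕ∞) ψ)
    (hψsupp : tsupport ψ ⊆ ball 0 1) (hψint : ∫ x, ψ x = 1) :
    ∃ C : ℝ≥0∞, 1 ≤ C ∧ C ≠ ⊤ ∧
      ∀ f : EuclideanSpace ℝ (Fin n) → ℝ, LocallyIntegrable f →
        (((∃ g, IsHajlaszGradientOn n f g univ ∧ lpNorm n p g volume ≠ ⊤) ↔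
            ∀ j : Fin n, (∫⁻ x, smoothMax n ψ f j x ^ p) ^ (1 / p) ≠ ⊤) ∧
          C⁻¹ * ∑ j : Fin n, (∫⁻ x, smoothMax n ψ f j x ^ p) ^ (1 / p) ≤
              sInf {r : ℝ≥0∞ | ∃ g, IsHajlaszGradientOn n f g univ ∧
                r = lpNorm n p g volume} ∧
          sInf {r : ℝ≥0∞ | ∃ g, IsHajlaszGradientOn n f g univ ∧
                r = lpNorm n p g volume} ≤
              C * ∑ j : Fin n, (∫⁻ x, smoothMax n ψ f j x ^ p) ^ (1 / p)) := by
  have hb : IsBump ψ := ⟨hψ, hψsupp, hψint⟩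
  obtain ⟨A, hA, HA⟩ := dirA hn hb p hp1 hp2
  obtain ⟨B, hB, HB⟩ := dirB hn hb p hp1 hp2
  have hC1 : (1 : ℝ≥0∞) ≤ 1 + n * A + B := by rw [add_assoc]; exact le_self_add
  have hC0 : (1 + n * A + B : ℝ≥0∞) ≠ 0 := (zero_lt_one.trans_le hC1).ne'
  have hCt : (1 + n * A + B : ℝ≥0∞) ≠ ⊤ := by finiteness
  have hCA : (n * A : ℝ≥0∞) ≤ 1 + n * A + B := le_add_self.trans le_self_add
  have hCB : B ≤ 1 + n * A + B := le_add_self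
  refine ⟨1 + n * A + B, hC1, hCt, fun f hf => ⟨⟨?_, ?_⟩, ?_, ?_⟩⟩
  · rintro ⟨g, hg, hgt⟩ j
    exact ne_top_of_le_ne_top (ENNReal.mul_ne_top hA hgt) (HA f g hf hg j)
  · intro h
    have hS : (∑ j, (∫⁻ x, smoothMax n ψ f j x ^ p) ^ (1 / p)) ≠ ⊤ :=
      ENNReal.sum_ne_top.2 fun j _ => h j
    obtain ⟨g, hg, hgt⟩ := HB f hf hS
    exact ⟨g, hg, ne_top_of_le_ne_top (ENNReal.mul_ne_top hB hS) hgt⟩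
  · refine le_sInf ?_
    rintro _ ⟨g, hg, rfl⟩
    rw [ENNReal.inv_mul_le_iff hC0 hCt]
    calc ∑ j : Fin n, (∫⁻ x, smoothMax n ψ f j x ^ p) ^ (1 / p)
        ≤ ∑ _j : Fin n, A * lpNorm n p g volume := Finset.sum_le_sum fun j _ => HA f g hf hg j
      _ = n * A * lpNorm n p g volume := by simp [mul_assoc]
      _ ≤ _ := mul_le_mul_left hCA _
  · by_cases hS : (∑ j, (∫⁻ x, smoothMax n ψ f j x ^ p) ^ (1 / p)) = ⊤
    · rw [hS, ENNReal.mul_top hC0]; exact le_top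
    · obtain ⟨g, hg, hgt⟩ := HB f hf hS
      refine le_trans (sInf_le ?_) (hgt.trans (mul_le_mul_left hCB _))
      exact ⟨g, hg, rfl⟩
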